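/- arXiv:0911.1093 — 9 statements merged into one kernel-verified Lean document; each statement's English description precedes it below -/
import Mathlib

section
/- Let p ≥ 5 be a prime, q = 2(p−1), and let s₁ be an integer with 0 < s₁ < p. Let t ≥ 0 be an integer with digits c_{-1}(t), c_0(t), c_1(t), …. If c_j(t) > s₁ for some j ≥ 0, then there is no finite multiset of May generators with total filtration s₁ and total degree t (this is the combinatorial content of the vanishing E₁^{s₁,t,*} = 0 in the May spectral sequence). -/
/-- A formal May spectral sequence generator: `a k`, `h i j`, or `b i j`. -/
inductive MayGen : Type
  | a (k : ℕ)
  | h (i j : ℕ)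
  | b (i j : ℕ)
  deriving DecidableEq

namespace MayGen

/-- Validity: the generators `h i j` and `b i j` require `i ≥ 1`. -/
def IsValid : MayGen → Prop
  | a _ => True
  | h i _ => 1 ≤ i
  | b i _ => 1 ≤ i

/-- May filtration of a generator. -/
def filt : MayGen → ℕ
  | a _ => 1
  | h _ _ => 1
  | b _ _ => 2

/-- Internal degree of a generator (at the prime `p`). -/
def deg (p : ℕ) : MayGen → ℕ
  | a k => 2 * p ^ k - 1
  | h i j => 2 * (p ^ i - 1) * p ^ j
  | b i j => 2 * (p ^ i - 1) * p ^ (j + 1)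

end MayGen

/-- Total filtration of a multiset of May generators. -/
def totalFilt (S : Multiset MayGen) : ℕ := (S.map MayGen.filt).sum

/-- Total internal degree of a multiset of May generators. -/
def totalDeg (p : ℕ) (S : Multiset MayGen) : ℕ := (S.map (MayGen.deg p)).sum

/-- An admissible monomial: each exterior generator `h i j` occurs at most once. -/
def Admissible (S : Multiset MayGen) : Prop := ∀ i j : ℕ, S.count (MayGen.h i j) ≤ 1

/-- The `j`-th digit (`j ≥ -1`) of `t` in the mixed radix `(q, p, p, …)` with
`q = 2(p-1)`:  `t = c₋₁ + q·Σ_{j≥0} c_j p^j` with `0 ≤ c₋₁ < q`, `0 ≤ c_j < p`. -/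
def mayDigit (p t : ℕ) (j : ℤ) : ℕ :=
  if j = -1 then t % (2 * (p - 1))
  else if 0 ≤ j then (t / (2 * (p - 1)) / p ^ j.toNat) % p
  else 0

/-- All base-`p` digits of `N` are at most `n`. -/
def DigLe (p n N : ℕ) : Prop := ∀ j : ℕ, N / p ^ j % p ≤ n

theorem DigLe.add_digits (p : ℕ) (hp : 0 < p) (n m : ℕ) (hnm : n + m < p) (N M : ℕ)
    (hN : DigLe p n N) (hM : DigLe p m M) : DigLe p (n + m) (N + M) := by
  intro j
  induction j generalizing N M with
  | zero =>
    have h1 := hN 0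
    have h2 := hM 0
    simp only [pow_zero, Nat.div_one] at *
    rw [Nat.add_mod]
    exact (Nat.mod_le _ _).trans (by omega)
  | succ j ih =>
    have h1 := hN 0
    have h2 := hM 0
    simp only [pow_zero, Nat.div_one] at h1 h2
    have hs : (N + M) / p = N / p + M / p := by
      rw [Nat.add_div hp, if_neg (by omega)]; rfl
    rw [pow_succ', ← Nat.div_div_eq_div_mul, hs]
    apply ih
    · intro k
      have := hN (k + 1)
      rwa [pow_succ', ← Nat.div_div_eq_div_mul] at this
    · intro k
      have := hM (k + 1)
      rwa [pow_succ', ← Nat.div_div_eq_div_mul] at this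

theorem DigLe.cons_digit (p : ℕ) (n N c : ℕ) (hc : c ≤ n) (hcp : c < p)
    (hN : DigLe p n N) : DigLe p n (p * N + c) := by
  intro j
  cases j with
  | zero =>
    simp only [pow_zero, Nat.div_one, Nat.mul_add_mod, Nat.mod_eq_of_lt hcp]
    exact hc
  | succ j =>
    rw [pow_succ', ← Nat.div_div_eq_div_mul, Nat.mul_add_div (by omega),
      Nat.div_eq_of_lt hcp, Nat.add_zero]
    exact hN j

theorem exists_repunit (p : ℕ) (hp : 2 ≤ p) (i : ℕ) :
    ∃ N, p ^ i = 1 + (p - 1) * N ∧ DigLe p 1 N := by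
  induction i with
  | zero => exact ⟨0, by simp, fun j => by simp⟩
  | succ i ih =>
    obtain ⟨N, hN, hD⟩ := ih
    refine ⟨p * N + 1, ?_, DigLe.cons_digit p 1 N 1 le_rfl (by omega) hD⟩
    obtain ⟨r, rfl⟩ : ∃ r, p = r + 1 := ⟨p - 1, by omega⟩
    rw [pow_succ, hN]
    simp only [Nat.add_sub_cancel]
    ring

theorem exists_shift (p : ℕ) (hp : 2 ≤ p) (i j : ℕ) :
    ∃ N, (p ^ i - 1) * p ^ j = (p - 1) * N ∧ DigLe p 1 N := by
  induction j with
  | zero =>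
    obtain ⟨N, hN, hD⟩ := exists_repunit p hp i
    exact ⟨N, by rw [hN]; simp, hD⟩
  | succ j ih =>
    obtain ⟨N, hN, hD⟩ := ih
    refine ⟨p * N + 0, ?_, DigLe.cons_digit p 1 N 0 (by omega) (by omega) hD⟩
    rw [pow_succ, ← mul_assoc, hN]
    ring

theorem MayGen.deg_form (p : ℕ) (hp : 2 ≤ p) (x : MayGen) :
    ∃ e N, x.deg p = e + 2 * (p - 1) * N ∧ e ≤ x.filt ∧ DigLe p x.filt N := by
  cases x with
  | a k =>
    obtain ⟨N, hN, hD⟩ := exists_repunit p hp k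
    refine ⟨1, N, ?_, le_rfl, hD⟩
    simp only [MayGen.deg]
    rw [hN, mul_assoc]
    omega
  | h i j =>
    obtain ⟨N, hN, hD⟩ := exists_shift p hp i j
    refine ⟨0, N, ?_, Nat.zero_le _, hD⟩
    simp only [MayGen.deg]
    rw [mul_assoc, hN]
    ring
  | b i j =>
    obtain ⟨N, hN, hD⟩ := exists_shift p hp i (j + 1)
    refine ⟨0, N, ?_, Nat.zero_le _, fun k => (hD k).trans (by simp [MayGen.filt])⟩
    simp only [MayGen.deg]
    rw [mul_assoc, hN]
    ring

theorem totalDeg_form (p : ℕ) (hp : 2 ≤ p) (S : Multiset MayGen) (hS : totalFilt S < p) :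
    ∃ e N, totalDeg p S = e + 2 * (p - 1) * N ∧ e ≤ totalFilt S ∧ DigLe p (totalFilt S) N := by
  induction S using Multiset.induction_on with
  | empty => exact ⟨0, 0, by simp [totalDeg], Nat.zero_le _, fun j => by simp⟩
  | cons x S ih =>
    have hf : totalFilt (x ::ₘ S) = x.filt + totalFilt S := by simp [totalFilt]
    have hd : totalDeg p (x ::ₘ S) = x.deg p + totalDeg p S := by simp [totalDeg]
    rw [hf] at hS ⊢
    rw [hd]
    obtain ⟨e, N, h1, h2, h3⟩ := ih (by omega)
    obtain ⟨e', N', h1', h2', h3'⟩ := x.deg_form p hp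
    refine ⟨e' + e, N' + N, ?_, by omega,
      DigLe.add_digits p (by omega) _ _ hS _ _ h3' h3⟩
    rw [h1, h1']
    ring

/-- if some digit `c_j(t)` (`j ≥ 0`) exceeds `s₁` with `0 < s₁ < p`, then
there is no finite multiset of May generators of total filtration `s₁` and total degree `t`. -/
theorem stmt0 (p : ℕ) (hp : p.Prime) (hp5 : 5 ≤ p) (s₁ : ℕ) (hs₁0 : 0 < s₁) (hs₁p : s₁ < p)
    (t : ℕ) (j : ℕ) (hj : s₁ < mayDigit p t (j : ℤ)) :
    ¬ ∃ S : Multiset MayGen, (∀ x ∈ S, x.IsValid) ∧ totalFilt S = s₁ ∧ totalDeg p S = t := by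
  rintro ⟨S, -, hF, hD⟩
  obtain ⟨e, N, h1, h2, h3⟩ := totalDeg_form p (by omega) S (by omega)
  rw [hF] at h2 h3
  have hq : t / (2 * (p - 1)) = N := by
    rw [← hD, h1, Nat.add_mul_div_left _ _ (by omega), Nat.div_eq_of_lt (by omega), Nat.zero_add]
  have h4 := h3 j
  rw [mayDigit, if_neg (by omega), if_pos (by omega), hq, Int.toNat_natCast] at hj
  omega
end

section
/- Let p ≥ 5 be a prime, q = 2(p−1), and let s₁ be an integer with 0 < s₁ < q. Let t ≥ 0 be an integer with digits c_{-1}(t), c_0(t), c_1(t), …. If c_{-1}(t) > s₁, then there is no finite multiset of May generators with total filtration s₁ and total degree t (this is the combinatorial content of the vanishing E₁^{s₁,t,*} = 0 in the May spectral sequence). -/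
theorem may_deg_mod (p : ℕ) (hp5 : 5 ≤ p) (x : MayGen) :
    ∃ n ≤ x.filt, MayGen.deg p x ≡ n [MOD 2 * (p - 1)] := by
  have key : ∀ k : ℕ, ∃ m, p ^ k = (p - 1) * m + 1 := by
    intro k
    obtain ⟨m, hm⟩ := Nat.sub_one_dvd_pow_sub_one p k
    have : 0 < p ^ k := Nat.pow_pos (by omega)
    exact ⟨m, by omega⟩
  cases x with
  | a k =>
    obtain ⟨m, hm⟩ := key k
    refine ⟨1, le_refl _, ?_⟩
    have : MayGen.deg p (.a k) = 1 + 2 * (p - 1) * m := by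
      simp only [MayGen.deg, hm, mul_assoc]
      omega
    rw [this]
    simp [Nat.ModEq]
  | h i j =>
    obtain ⟨m, hm⟩ := key i
    refine ⟨0, Nat.zero_le _, ?_⟩
    rw [Nat.modEq_zero_iff_dvd]
    exact ⟨m * p ^ j, by simp only [MayGen.deg, hm, Nat.add_sub_cancel]; ring⟩
  | b i j =>
    obtain ⟨m, hm⟩ := key i
    refine ⟨0, Nat.zero_le _, ?_⟩
    rw [Nat.modEq_zero_iff_dvd]
    exact ⟨m * p ^ (j + 1), by simp only [MayGen.deg, hm, Nat.add_sub_cancel]; ring⟩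

theorem may_total_mod (p : ℕ) (hp5 : 5 ≤ p) (S : Multiset MayGen) :
    ∃ n ≤ totalFilt S, totalDeg p S ≡ n [MOD 2 * (p - 1)] := by
  induction S using Multiset.induction with
  | empty => exact ⟨0, Nat.zero_le _, by simp [totalDeg, Nat.ModEq]⟩
  | cons x S ih =>
    obtain ⟨n, hn, h⟩ := ih
    obtain ⟨m, hm, h'⟩ := may_deg_mod p hp5 x
    refine ⟨m + n, ?_, ?_⟩
    · simp only [totalFilt, Multiset.map_cons, Multiset.sum_cons] at *
      omega
    · simp only [totalDeg, Multiset.map_cons, Multiset.sum_cons] at *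
      exact h'.add h

/-- if `c₋₁(t) > s₁` with `0 < s₁ < q = 2(p-1)`, then there is no finite
multiset of May generators of total filtration `s₁` and total degree `t`. -/
theorem stmt1 (p : ℕ) (hp : p.Prime) (hp5 : 5 ≤ p) (s₁ : ℕ) (hs₁0 : 0 < s₁)
    (hs₁q : s₁ < 2 * (p - 1)) (t : ℕ) (hdig : s₁ < mayDigit p t (-1)) :
    ¬ ∃ S : Multiset MayGen, (∀ x ∈ S, x.IsValid) ∧ totalFilt S = s₁ ∧ totalDeg p S = t := by
  rintro ⟨S, -, hf, hd⟩
  obtain ⟨n, hn, h⟩ := may_total_mod p hp5 S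
  rw [hf] at hn
  rw [hd] at h
  simp only [mayDigit, if_true] at hdig
  rw [Nat.ModEq, Nat.mod_eq_of_lt (lt_of_le_of_lt hn hs₁q)] at h
  omega
end

section
/- Let p ≥ 5 be a prime, q = 2(p−1), and let x₁, …, x_m be May generators; for each integer j ≥ −1 set c̄_j = Σ_{i=1}^{m} c_j(deg x_i), the sum over i of the j-th digit of deg x_i. Then for all integers −1 ≤ j₁ < j₂ < j₃ one has c̄_{j₁} + c̄_{j₃} − m ≤ c̄_{j₂}. (Equivalently, in the paper's formulation: if there exist −1 ≤ j₁ < j₂ < j₃ with c̄_{j₁} + c̄_{j₃} − m > c̄_{j₂}, then such a monomial ω = x₁⋯x_m cannot exist.) -/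
/-- Repunits in base `p`. -/
def repU (p : ℕ) : ℕ → ℕ
  | 0 => 0
  | i + 1 => p * repU p i + 1

theorem repU_spec (p : ℕ) (hp5 : 5 ≤ p) (i : ℕ) : p ^ i = (p - 1) * repU p i + 1 := by
  obtain ⟨r, rfl⟩ : ∃ r, p = r + 1 := ⟨p - 1, by omega⟩
  induction i with
  | zero => simp [repU]
  | succ i ih =>
    rw [pow_succ, ih]
    simp only [repU, Nat.add_sub_cancel]
    ring

theorem repU_digit (p : ℕ) (hp5 : 5 ≤ p) (n i : ℕ) :
    repU p i / p ^ n % p = if n < i then 1 else 0 := by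
  induction n generalizing i with
  | zero =>
    cases i with
    | zero => simp [repU]
    | succ i =>
      simp only [repU, pow_zero, Nat.div_one, Nat.mul_add_mod]
      simp [Nat.mod_eq_of_lt (show 1 < p by omega)]
  | succ n ih =>
    cases i with
    | zero => simp [repU]
    | succ i =>
      have h : (p * repU p i + 1) / p = repU p i := by
        rw [Nat.mul_add_div (by omega), Nat.div_eq_of_lt (by omega)]; rfl
      rw [pow_succ', ← Nat.div_div_eq_div_mul]
      simp only [repU, h, ih]
      simp

theorem repU_shift_digit (p : ℕ) (hp5 : 5 ≤ p) (n i j : ℕ) :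
    repU p i * p ^ j / p ^ n % p = if j ≤ n ∧ n < j + i then 1 else 0 := by
  have hpos : ∀ m, 0 < p ^ m := fun m => Nat.pow_pos (by omega)
  by_cases hj : j ≤ n
  · obtain ⟨m, rfl⟩ := Nat.exists_eq_add_of_le hj
    rw [pow_add, ← Nat.div_div_eq_div_mul, Nat.mul_div_cancel _ (hpos j), repU_digit p hp5]
    simp
  · obtain ⟨m, rfl⟩ := Nat.exists_eq_add_of_lt (not_le.mp hj)
    have : repU p i * p ^ (n + m + 1) = (repU p i * p ^ m * p) * p ^ n := by ring
    rw [this, Nat.mul_div_cancel _ (hpos n)]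
    simp [hj]

theorem mayDigit_h (p : ℕ) (hp5 : 5 ≤ p) (i j : ℕ) (n : ℤ) :
    mayDigit p (2 * (p ^ i - 1) * p ^ j) n = if (j : ℤ) ≤ n ∧ n < j + i then 1 else 0 := by
  have e : 2 * (p ^ i - 1) * p ^ j = (2 * (p - 1)) * (repU p i * p ^ j) := by
    rw [show p ^ i - 1 = (p - 1) * repU p i by have := repU_spec p hp5 i; omega]; ring
  rw [e]
  unfold mayDigit
  split_ifs with h1 h2 h3 h4 h5
  · omega
  · simp
  · rw [Nat.mul_div_cancel_left _ (by omega), repU_shift_digit p hp5, if_pos (by omega)]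
  · rw [Nat.mul_div_cancel_left _ (by omega), repU_shift_digit p hp5, if_neg (by omega)]
  · omega
  · rfl

theorem mayDigit_a (p : ℕ) (hp5 : 5 ≤ p) (k : ℕ) (n : ℤ) :
    mayDigit p (2 * p ^ k - 1) n = if -1 ≤ n ∧ n < k then 1 else 0 := by
  have e : 2 * p ^ k - 1 = (2 * (p - 1)) * repU p k + 1 := by
    have := repU_spec p hp5 k
    rw [mul_assoc]; omega
  have hd : ((2 * (p - 1)) * repU p k + 1) / (2 * (p - 1)) = repU p k := by
    rw [Nat.mul_add_div (by omega), Nat.div_eq_of_lt (by omega)]; rfl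
  rw [e]
  unfold mayDigit
  rw [hd, Nat.mul_add_mod, Nat.mod_eq_of_lt (show 1 < 2 * (p - 1) by omega), repU_digit p hp5]
  split_ifs <;> omega

theorem gen_ineq (p : ℕ) (hp5 : 5 ≤ p) (x : MayGen) (j₁ j₂ j₃ : ℤ) (h12 : j₁ < j₂)
    (h23 : j₂ < j₃) :
    mayDigit p (MayGen.deg p x) j₁ + mayDigit p (MayGen.deg p x) j₃ ≤
      mayDigit p (MayGen.deg p x) j₂ + 1 := by
  cases x with
  | a k => simp only [MayGen.deg, mayDigit_a p hp5]; split_ifs <;> omega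
  | h i j => simp only [MayGen.deg, mayDigit_h p hp5]; split_ifs <;> omega
  | b i j => simp only [MayGen.deg, mayDigit_h p hp5]; split_ifs <;> omega

/-- for May generators `x₁, …, x_m` and `c̄_j = Σᵢ c_j(deg xᵢ)`, for all
`-1 ≤ j₁ < j₂ < j₃` one has `c̄_{j₁} + c̄_{j₃} - m ≤ c̄_{j₂}`. -/
theorem stmt2 (p : ℕ) (hp : p.Prime) (hp5 : 5 ≤ p) (S : Multiset MayGen)
    (hval : ∀ x ∈ S, x.IsValid) (j₁ j₂ j₃ : ℤ) (h1 : -1 ≤ j₁) (h12 : j₁ < j₂) (h23 : j₂ < j₃) :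
    (S.map (fun x => mayDigit p (MayGen.deg p x) j₁)).sum +
      (S.map (fun x => mayDigit p (MayGen.deg p x) j₃)).sum ≤
    (S.map (fun x => mayDigit p (MayGen.deg p x) j₂)).sum + Multiset.card S := by
  clear hval
  induction S using Multiset.induction_on with
  | empty => simp
  | cons x S ih =>
    have := gen_ineq p hp5 x j₁ j₂ j₃ h12 h23
    simp only [Multiset.map_cons, Multiset.sum_cons, Multiset.card_cons]
    omega
end

section
/- Let p ≥ 5 be a prime, q = 2(p−1), and let x₁, …, x_m be May generators each of filtration 1 (i.e., each is some a_k or some h_{i,j}); for j ≥ −1 set c̄_j = Σ_{i=1}^{m} c_j(deg x_i). Suppose 0 ≤ i₁ < i₃ are integers such that c̄_j = 0 for every j ≥ −1 with j < i₁ or j > i₃. Then at least (c̄_{i₁} + c̄_{i₃} − m) of the generators x₁, …, x_m are equal to h_{i₃−i₁+1, i₁}. In particular, if c̄_{i₁} + c̄_{i₃} − m > 1 then the exterior generator h_{i₃−i₁+1, i₁} occurs at least twice among the x_i, so the multiset {x₁, …, x_m} is not an admissible monomial (the corresponding May monomial is zero). -/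
theorem geom_digit (p : ℕ) (hp5 : 5 ≤ p) (m : ℕ) : ∀ i : ℕ,
    ((∑ k ∈ Finset.range i, p ^ k) / p ^ m) % p = if m < i then 1 else 0 := by
  induction m with
  | zero =>
    intro i
    cases i with
    | zero => simp
    | succ i =>
      rw [Finset.sum_range_succ']
      simp only [pow_succ, ← Finset.sum_mul]
      simp [Nat.add_mod, Nat.mod_eq_of_lt (show 1 < p by omega)]
  | succ m ih =>
    intro i
    cases i with
    | zero => simp
    | succ i =>
      rw [Finset.sum_range_succ']
      simp only [pow_succ, ← Finset.sum_mul]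
      rw [mul_comm (p ^ m) p, ← Nat.div_div_eq_div_mul]
      have h1 : ((∑ k ∈ Finset.range i, p ^ k) * p + p ^ 0) / p
          = ∑ k ∈ Finset.range i, p ^ k := by
        rw [mul_comm, Nat.mul_add_div (by omega), pow_zero, Nat.div_eq_of_lt (by omega), add_zero]
      rw [h1, ih]
      simp

theorem h_deg_eq (p : ℕ) (hp5 : 5 ≤ p) (i j : ℕ) :
    MayGen.deg p (MayGen.h i j) =
      (2 * (p - 1)) * ((∑ k ∈ Finset.range i, p ^ k) * p ^ j) := by
  have h := Nat.geomSum_eq (show 2 ≤ p by omega) i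
  have h2 : (p - 1) * (∑ k ∈ Finset.range i, p ^ k) = p ^ i - 1 := by
    rw [h]
    exact Nat.mul_div_cancel' (by simpa using Nat.sub_dvd_pow_sub_pow p 1 i)
  simp only [MayGen.deg]
  rw [← h2]
  ring

theorem h_digit (p : ℕ) (hp5 : 5 ≤ p) (i j l : ℕ) :
    mayDigit p (MayGen.deg p (MayGen.h i j)) (l : ℤ) =
      if j ≤ l ∧ l < j + i then 1 else 0 := by
  rw [h_deg_eq p hp5]
  have hl : (l : ℤ) ≠ -1 := by omega
  simp only [mayDigit, hl, if_false, Int.natCast_nonneg, if_true, Int.toNat_natCast]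
  rw [Nat.mul_div_cancel_left _ (by omega)]
  have hpp : ∀ n, 0 < p ^ n := fun n => Nat.pow_pos (by omega)
  by_cases hjl : j ≤ l
  · obtain ⟨m, rfl⟩ := Nat.exists_eq_add_of_le hjl
    rw [pow_add, ← Nat.div_div_eq_div_mul, Nat.mul_div_cancel _ (hpp j), geom_digit p hp5]
    simp
  · obtain ⟨m, rfl⟩ := Nat.exists_eq_add_of_lt (not_le.mp hjl)
    have : (∑ k ∈ Finset.range i, p ^ k) * p ^ (l + m + 1)
        = ((∑ k ∈ Finset.range i, p ^ k) * p ^ m * p) * p ^ l := by ring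
    rw [this, Nat.mul_div_cancel _ (hpp l), Nat.mul_mod_left, if_neg]
    omega

theorem a_digit (p : ℕ) (hp5 : 5 ≤ p) (k : ℕ) :
    mayDigit p (MayGen.deg p (MayGen.a k)) (-1) ≠ 0 := by
  simp only [mayDigit, if_true, MayGen.deg]
  intro h
  have hd := (Dvd.intro (p - 1) rfl : 2 ∣ 2 * (p - 1)).trans (Nat.dvd_of_mod_eq_zero h)
  have : 0 < p ^ k := Nat.pow_pos (by omega)
  omega

theorem sum_bound (f g : MayGen → ℕ) (y : MayGen) (S : Multiset MayGen)
    (h : ∀ x ∈ S, f x + g x ≤ (if y = x then 1 else 0) + 1) :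
    (S.map f).sum + (S.map g).sum ≤ S.count y + Multiset.card S := by
  induction S using Multiset.induction_on with
  | empty => simp
  | cons x S ih =>
    have h1 := h x (Multiset.mem_cons_self x S)
    have h2 := ih fun z hz => h z (Multiset.mem_cons_of_mem hz)
    simp only [Multiset.map_cons, Multiset.sum_cons, Multiset.count_cons, Multiset.card_cons]
    omega

/-- if all generators of `S` have filtration `1` and the digit sums `c̄_j`
vanish outside `[i₁, i₃]` with `0 ≤ i₁ < i₃`, then at least `c̄_{i₁} + c̄_{i₃} - m`
members of `S` equal `h (i₃-i₁+1) i₁`; in particular if `c̄_{i₁} + c̄_{i₃} - m > 1`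
then `S` is not admissible. -/
theorem stmt4 (p : ℕ) (hp : p.Prime) (hp5 : 5 ≤ p) (S : Multiset MayGen)
    (hval : ∀ x ∈ S, x.IsValid) (hfilt : ∀ x ∈ S, x.filt = 1)
    (i₁ i₃ : ℕ) (h13 : i₁ < i₃)
    (hzero : ∀ j : ℤ, -1 ≤ j → (j < (i₁ : ℤ) ∨ (i₃ : ℤ) < j) →
      (S.map (fun x => mayDigit p (MayGen.deg p x) j)).sum = 0) :
    ((S.map (fun x => mayDigit p (MayGen.deg p x) (i₁ : ℤ))).sum +
        (S.map (fun x => mayDigit p (MayGen.deg p x) (i₃ : ℤ))).sum ≤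
      S.count (MayGen.h (i₃ - i₁ + 1) i₁) + Multiset.card S) ∧
    (Multiset.card S + 1 <
        (S.map (fun x => mayDigit p (MayGen.deg p x) (i₁ : ℤ))).sum +
          (S.map (fun x => mayDigit p (MayGen.deg p x) (i₃ : ℤ))).sum →
      ¬ Admissible S) := by
  have hbd : (S.map (fun x => mayDigit p (MayGen.deg p x) (i₁ : ℤ))).sum +
        (S.map (fun x => mayDigit p (MayGen.deg p x) (i₃ : ℤ))).sum ≤
      S.count (MayGen.h (i₃ - i₁ + 1) i₁) + Multiset.card S := by
    apply sum_bound
    intro x hx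
    have hz : ∀ j : ℤ, -1 ≤ j → (j < (i₁ : ℤ) ∨ (i₃ : ℤ) < j) →
        mayDigit p (MayGen.deg p x) j = 0 := fun j h1 h2 =>
      Multiset.sum_eq_zero_iff.mp (hzero j h1 h2) _ (Multiset.mem_map_of_mem _ hx)
    cases x with
    | a k => exact absurd (hz (-1) (by omega) (by omega)) (a_digit p hp5 k)
    | b i j => exact absurd (hfilt _ hx) (by simp [MayGen.filt])
    | h i j =>
      have hi : 1 ≤ i := hval _ hx
      have hz' : ∀ l : ℕ, (l < i₁ ∨ i₃ < l) → ¬ (j ≤ l ∧ l < j + i) := by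
        intro l hl hc
        have := hz l (by omega) (by omega)
        rw [h_digit p hp5, if_pos hc] at this
        omega
      have hA := hz' j
      have hB := hz' (j + i - 1)
      rw [h_digit p hp5, h_digit p hp5]
      simp only [MayGen.h.injEq]
      split_ifs <;> omega
  refine ⟨hbd, fun hlt hadm => ?_⟩
  have := hadm (i₃ - i₁ + 1) i₁
  omega
end

section
/- Let p ≥ 5 be a prime, q = 2(p−1), and let x₁, …, x_m be May generators each of filtration 1 (i.e., each is some a_k or some h_{i,j}); for j ≥ −1 set c̄_j = Σ_{i=1}^{m} c_j(deg x_i). Suppose i₃ ≥ 0 is an integer such that c̄_j = 0 for every j > i₃. Then at least (c̄_{−1} + c̄_{i₃} − m) of the generators x₁, …, x_m are equal to a_{i₃+1}. -/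
def mayG (p : ℕ) : ℕ → ℕ
  | 0 => 0
  | k + 1 => p * mayG p k + 1

lemma mayG_pow (p : ℕ) (hp : 5 ≤ p) (k : ℕ) : p ^ k = (p - 1) * mayG p k + 1 := by
  obtain ⟨n, rfl⟩ : ∃ n, p = n + 1 := ⟨p - 1, by omega⟩
  induction k with
  | zero => simp [mayG]
  | succ k ih =>
    rw [pow_succ, ih]
    simp only [mayG, Nat.add_sub_cancel]
    ring

lemma mayG_digit (p : ℕ) (hp : 5 ≤ p) (j k : ℕ) :
    (mayG p k / p ^ j) % p = if j < k then 1 else 0 := by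
  induction j generalizing k with
  | zero =>
    cases k with
    | zero => simp [mayG]
    | succ k =>
      simp only [mayG, pow_zero, Nat.div_one, Nat.mul_add_mod]
      rw [Nat.mod_eq_of_lt (by omega)]
      simp
  | succ j ih =>
    cases k with
    | zero => simp [mayG]
    | succ k =>
      have h1 : mayG p (k + 1) / p = mayG p k := by
        simp only [mayG]
        rw [Nat.mul_add_div (by omega), Nat.div_eq_of_lt (by omega : 1 < p), Nat.add_zero]
      rw [pow_succ', ← Nat.div_div_eq_div_mul, h1, ih]
      simp

lemma deg_a_eq (p : ℕ) (hp : 5 ≤ p) (k : ℕ) :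
    MayGen.deg p (MayGen.a k) = 2 * (p - 1) * mayG p k + 1 := by
  simp only [MayGen.deg]
  rw [mayG_pow p hp k, mul_assoc]
  omega

lemma deg_h_eq (p : ℕ) (hp : 5 ≤ p) (i j : ℕ) :
    MayGen.deg p (MayGen.h i j) = 2 * (p - 1) * (mayG p i * p ^ j) := by
  simp only [MayGen.deg]
  have : p ^ i - 1 = (p - 1) * mayG p i := by rw [mayG_pow p hp i]; simp
  rw [this]
  ring

lemma digit_a (p : ℕ) (hp : 5 ≤ p) (k l : ℕ) :
    mayDigit p (MayGen.deg p (MayGen.a k)) (l : ℤ) = if l < k then 1 else 0 := by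
  rw [deg_a_eq p hp, mayDigit, if_neg (by omega), if_pos (by omega), Int.toNat_natCast,
    Nat.mul_add_div (by omega), Nat.div_eq_of_lt (by omega : 1 < 2 * (p - 1)), Nat.add_zero,
    mayG_digit p hp]

lemma digit_a_neg (p : ℕ) (hp : 5 ≤ p) (k : ℕ) :
    mayDigit p (MayGen.deg p (MayGen.a k)) (-1) = 1 := by
  rw [deg_a_eq p hp, mayDigit, if_pos rfl, Nat.mul_add_mod, Nat.mod_eq_of_lt (by omega)]

lemma digit_h_neg (p : ℕ) (hp : 5 ≤ p) (i j : ℕ) :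
    mayDigit p (MayGen.deg p (MayGen.h i j)) (-1) = 0 := by
  rw [deg_h_eq p hp, mayDigit, if_pos rfl, Nat.mul_mod_right]

lemma digit_h (p : ℕ) (hp : 5 ≤ p) (i j l : ℕ) :
    mayDigit p (MayGen.deg p (MayGen.h i j)) (l : ℤ) ≤ 1 := by
  have hpos : 0 < p := by omega
  rw [deg_h_eq p hp, mayDigit, if_neg (by omega), if_pos (by omega), Int.toNat_natCast,
    Nat.mul_div_cancel_left _ (by omega)]
  rcases le_or_gt j l with h | h
  · obtain ⟨d, rfl⟩ := Nat.exists_eq_add_of_le h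
    rw [pow_add, ← Nat.div_div_eq_div_mul, Nat.mul_div_cancel _ (Nat.pow_pos hpos),
      mayG_digit p hp]
    split_ifs <;> simp
  · obtain ⟨d, rfl⟩ := Nat.exists_eq_add_of_lt h
    have : mayG p i * p ^ (l + d + 1) = p * (mayG p i * p ^ d) * p ^ l := by ring
    rw [this, Nat.mul_div_cancel _ (Nat.pow_pos hpos), Nat.mul_mod_right]
    simp

lemma sum_count_bound (f g : MayGen → ℕ) (y : MayGen) (S : Multiset MayGen)
    (H : ∀ x ∈ S, f x + g x ≤ (if y = x then 1 else 0) + 1) :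
    (S.map f).sum + (S.map g).sum ≤ S.count y + Multiset.card S := by
  induction S using Multiset.induction_on with
  | empty => simp
  | cons x S ih =>
    have h1 := H x (Multiset.mem_cons_self x S)
    have h2 := ih (fun z hz => H z (Multiset.mem_cons_of_mem hz))
    simp only [Multiset.map_cons, Multiset.sum_cons, Multiset.count_cons, Multiset.card_cons]
    omega

/-- if all generators of `S` have filtration `1` and the digit sums `c̄_j`
vanish for `j > i₃`, then at least `c̄_{-1} + c̄_{i₃} - m` members of `S` equal `a (i₃+1)`. -/
theorem stmt5 (p : ℕ) (hp : p.Prime) (hp5 : 5 ≤ p) (S : Multiset MayGen)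
    (hval : ∀ x ∈ S, x.IsValid) (hfilt : ∀ x ∈ S, x.filt = 1)
    (i₃ : ℕ)
    (hzero : ∀ j : ℤ, (i₃ : ℤ) < j →
      (S.map (fun x => mayDigit p (MayGen.deg p x) j)).sum = 0) :
    (S.map (fun x => mayDigit p (MayGen.deg p x) (-1 : ℤ))).sum +
      (S.map (fun x => mayDigit p (MayGen.deg p x) (i₃ : ℤ))).sum ≤
    S.count (MayGen.a (i₃ + 1)) + Multiset.card S := by
  apply sum_count_bound
  intro x hx
  cases x with
  | a k =>
    have hk := hzero ((i₃ + 1 : ℕ) : ℤ) (by push_cast; omega)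
    rw [Multiset.sum_eq_zero_iff] at hk
    have hk' := hk _ (Multiset.mem_map_of_mem _ hx)
    rw [digit_a p hp5] at hk'
    rw [digit_a p hp5, digit_a_neg p hp5]
    simp only [MayGen.a.injEq]
    split_ifs at hk' ⊢ <;> omega
  | h i j =>
    have := digit_h p hp5 i j i₃
    rw [digit_h_neg p hp5]
    omega
  | b i j => exact absurd (hfilt _ hx) (by simp [MayGen.filt])
end

section
/- Let p ≥ 5 be a prime, q = 2(p−1), and let m, n, s, r be integers with n ≥ m+2 > 5, 2 ≤ s < p, and 2 ≤ r ≤ s+3. Then there is no admissible monomial of total filtration s+3−r and total degree q(p^n + p^m + sp + s) + s − r − 1. (This is the combinatorial content of the vanishing of the May E₁-term E₁^{s+3−r, t(s)+s−r−1, *}, where t(s) = q(p^n + p^m + sp + s), which in turn yields Ext_A^{s+3−r, t(s)+s−r−1}(Z_p, Z_p) = 0.) -/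
namespace MayAux

/-- Digit sum in base `p`. -/
def ds (p R : ℕ) : ℕ := (Nat.digits p R).sum

lemma ds_add (p : ℕ) (hp : 5 ≤ p) (c R : ℕ) (hc : c < p) : ds p (c + p * R) = c + ds p R := by
  unfold ds
  by_cases h : c ≠ 0 ∨ R ≠ 0
  · rw [Nat.digits_add p (by omega) c R hc h]; simp
  · push Not at h
    obtain ⟨rfl, rfl⟩ := h
    simp

lemma ds_pow_mul (p : ℕ) (hp : 5 ≤ p) (k a : ℕ) : ∀ b, b < p ^ k →
    ds p (p ^ k * a + b) = ds p a + ds p b := by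
  induction k with
  | zero => intro b hb; simp at hb; subst hb; simp [ds]
  | succ k ih =>
    intro b hb
    have h1 : b % p < p := Nat.mod_lt _ (by omega)
    have h2 : b % p + p * (b / p) = b := Nat.mod_add_div b p
    have h3 : b / p < p ^ k := by
      apply Nat.div_lt_of_lt_mul; rw [pow_succ] at hb; linarith
    have e1 : p ^ (k+1) * a + b = b % p + p * (p ^ k * a + b / p) := by
      conv_lhs => rw [← h2]
      ring
    have e2 := ds_add p hp (b % p) (b / p) h1
    rw [h2] at e2
    rw [e1, ds_add p hp _ _ h1, ih _ h3, e2]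
    omega

lemma ds_pow (p : ℕ) (hp : 5 ≤ p) (k : ℕ) : ds p (p ^ k) = 1 := by
  have := ds_pow_mul p hp k 1 0 (by positivity)
  have h1 := ds_add p hp 1 0 (by omega)
  simp [ds] at *
  omega

lemma ds_pos (p : ℕ) (hp : 5 ≤ p) (R : ℕ) (hR : 0 < R) : 1 ≤ ds p R := by
  induction R using Nat.strong_induction_on with
  | _ R ih =>
    have h1 : R % p < p := Nat.mod_lt _ (by omega)
    have h2 : R % p + p * (R / p) = R := Nat.mod_add_div R p
    have e2 := ds_add p hp (R % p) (R / p) h1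
    rw [h2] at e2
    by_cases h : R % p = 0
    · have h4 : 0 < R / p := by
        rcases Nat.eq_zero_or_pos (R / p) with h0 | h0
        · rw [h0, h] at h2; omega
        · exact h0
      have := ih (R / p) (Nat.div_lt_self hR (by omega)) h4
      omega
    · omega

lemma ds_sub (p : ℕ) (hp : p.Prime) (a b : ℕ) : ds p (a + b) ≤ ds p a + ds p b := by
  have := Fact.mk hp
  have ha := sub_one_mul_padicValNat_factorial (p := p) a
  have hb := sub_one_mul_padicValNat_factorial (p := p) b
  have hab := sub_one_mul_padicValNat_factorial (p := p) (a + b)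
  have la := Nat.digit_sum_le p a
  have lb := Nat.digit_sum_le p b
  have lab := Nat.digit_sum_le p (a + b)
  have hv : padicValNat p a.factorial + padicValNat p b.factorial
      ≤ padicValNat p (a + b).factorial := by
    rw [← padicValNat.mul (Nat.factorial_ne_zero _) (Nat.factorial_ne_zero _)]
    exact (padicValNat_dvd_iff_le (Nat.factorial_ne_zero _)).1
      (dvd_trans pow_padicValNat_dvd (Nat.factorial_mul_factorial_dvd_factorial_add a b))
  have := Nat.mul_le_mul_left (p - 1) hv
  rw [mul_add] at this
  unfold ds
  omega

lemma ds_sum (p : ℕ) (hp : p.Prime) (hp5 : 5 ≤ p) (f : MayGen → ℕ) (S : Multiset MayGen) :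
    ds p ((S.map fun x => p ^ f x).sum) ≤ S.card := by
  induction S using Multiset.induction_on with
  | empty => simp [ds]
  | cons x S ih =>
    simp only [Multiset.map_cons, Multiset.sum_cons, Multiset.card_cons]
    have := ds_sub p hp (p ^ f x) ((S.map fun x => p ^ f x).sum)
    rw [ds_pow p hp5] at this
    omega

def en : MayGen → ℕ
  | .a k => k
  | .h i j => i + j
  | .b i j => i + j + 1

def st : MayGen → ℕ
  | .a _ => 0
  | .h _ j => j
  | .b _ j => j + 1

def isA : MayGen → ℕ
  | .a _ => 1
  | .h _ _ => 0
  | .b _ _ => 0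

lemma st_le (x : MayGen) : st x ≤ en x := by
  cases x <;> simp [st, en]

lemma deg_eq (p : ℕ) (hp5 : 5 ≤ p) (x : MayGen) :
    (x.deg p : ℤ) = isA x + 2 * ((p : ℤ) ^ en x - (p : ℤ) ^ st x) := by
  have key : ∀ k, 1 ≤ p ^ k := fun k => Nat.one_le_pow _ _ (by omega)
  cases x with
  | a k =>
    have := key k
    simp only [MayGen.deg, isA, en, st]
    rw [Nat.cast_sub (by omega)]; push_cast; ring
  | h i j =>
    simp only [MayGen.deg, isA, en, st]
    push_cast [Nat.cast_sub (key i)]; ring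
  | b i j =>
    simp only [MayGen.deg, isA, en, st]
    push_cast [Nat.cast_sub (key i)]; ring

lemma total_eq (p : ℕ) (hp5 : 5 ≤ p) (S : Multiset MayGen) :
    (totalDeg p S : ℤ) = (S.map isA).sum +
      2 * (((S.map fun x => p ^ en x).sum : ℕ) - ((S.map fun x => p ^ st x).sum : ℕ) : ℤ) := by
  unfold totalDeg
  induction S using Multiset.induction_on with
  | empty => simp
  | cons x S ih =>
    simp only [Multiset.map_cons, Multiset.sum_cons]
    push_cast
    push_cast at ih
    rw [ih, deg_eq p hp5]; ring

lemma isA_le (S : Multiset MayGen) : (S.map isA).sum ≤ totalFilt S := by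
  unfold totalFilt
  apply Multiset.sum_map_le_sum_map
  intro x _
  cases x <;> simp [isA, MayGen.filt]

lemma card_le (S : Multiset MayGen) : S.card ≤ totalFilt S := by
  unfold totalFilt
  have : (S.map (fun _ => 1)).sum ≤ (S.map MayGen.filt).sum := by
    apply Multiset.sum_map_le_sum_map
    intro x _
    cases x <;> simp [MayGen.filt]
  simpa using this

lemma dvd_diff (p : ℕ) (S : Multiset MayGen) : ((p : ℤ) - 1) ∣
      (((S.map fun x => p ^ en x).sum : ℕ) - ((S.map fun x => p ^ st x).sum : ℕ) : ℤ) := by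
  induction S using Multiset.induction_on with
  | empty => simp
  | cons x S ih =>
    simp only [Multiset.map_cons, Multiset.sum_cons]
    have h1 : ((p : ℤ) - 1) ∣ (p : ℤ) ^ en x - (p : ℤ) ^ st x := by
      have a1 := sub_one_dvd_pow_sub_one (p : ℤ) (en x)
      have a2 := sub_one_dvd_pow_sub_one (p : ℤ) (st x)
      have := dvd_sub a1 a2
      simpa using this
    have := dvd_add h1 ih
    push_cast at *
    obtain ⟨k, hk⟩ := this
    exact ⟨k, by linear_combination hk⟩

def good (x : MayGen) : Prop := st x = 0 ∧ 0 < en x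

instance : DecidablePred good := fun x => by unfold good; infer_instance

lemma dvd_good (p : ℕ) (S : Multiset MayGen) : (p : ℤ) ∣
      (((S.map fun x => p ^ en x).sum : ℕ) - ((S.map fun x => p ^ st x).sum : ℕ) : ℤ)
        + ((S.filter good).card : ℤ) := by
  induction S using Multiset.induction_on with
  | empty => simp
  | cons x S ih =>
    simp only [Multiset.map_cons, Multiset.sum_cons]
    have h1 : (p : ℤ) ∣ (p : ℤ) ^ en x - (p : ℤ) ^ st x + (if good x then 1 else 0) := by
      have := st_le x
      split_ifs with h
      · rw [h.1, pow_zero, sub_add_cancel]; exact dvd_pow_self _ (Nat.pos_iff_ne_zero.1 h.2)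
      · unfold good at h
        by_cases h0 : st x = 0
        · have h3 : en x = 0 := by by_contra h2; exact h ⟨h0, Nat.pos_of_ne_zero h2⟩
          simp [h0, h3]
        · simp
          have h4 : en x ≠ 0 := by omega
          exact dvd_sub (dvd_pow_self _ h4) (dvd_pow_self _ h0)
    have := dvd_add h1 ih
    clear h1 ih
    rw [Multiset.filter_cons]
    by_cases h : good x <;> simp [h] at * <;> obtain ⟨k, hk⟩ := this <;> exact ⟨k, by linear_combination hk⟩

lemma st_good (p : ℕ) (S : Multiset MayGen) :
    ((S.filter good).map fun x => p ^ st x).sum = (S.filter good).card := by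
  rw [Multiset.map_congr (g := fun _ => 1) rfl]
  · simp
  · intro x hx
    rw [(Multiset.mem_filter.1 hx).2.1]; simp

/-- Digit sum bounds for the right-hand side. -/
lemma low_bound (p : ℕ) (hp5 : 5 ≤ p) (d : ℕ) (hd : 1 ≤ d) (m L : ℕ) (hL : L < p ^ m) :
    2 * (p - 1) ≤ ds p (p ^ m * (p ^ d * (p - 1) + (p - 1)) + L) := by
  rw [ds_pow_mul p hp5 _ _ _ hL, ds_pow_mul p hp5]
  · have := ds_add p hp5 (p - 1) 0 (by omega)
    simp only [mul_zero, add_zero] at this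
    omega
  · calc p - 1 < p ^ 1 := by simp; omega
      _ ≤ p ^ d := Nat.pow_le_pow_right (by omega) hd

lemma high_bound (p : ℕ) (hp5 : 5 ≤ p) (d t : ℕ) (hd : 2 ≤ d) :
    2 ≤ ds p (p ^ d * (p - 1) + (p - 1) + p ^ t) := by
  obtain ⟨P, rfl⟩ : ∃ P, p = P + 1 := ⟨p - 1, by omega⟩
  obtain ⟨e, rfl⟩ : ∃ e, d = e + 2 := ⟨d - 2, by omega⟩
  simp only [Nat.add_sub_cancel]
  rcases t with _ | t
  · have : (P + 1) ^ (e + 2) * P + P + (P + 1) ^ 0 =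
        0 + (P + 1) * (1 + (P + 1) * ((P + 1) ^ e * P)) := by ring
    rw [this, ds_add _ hp5 _ _ (by omega), ds_add _ hp5 _ _ (by omega)]
    have := ds_pos (P + 1) hp5 ((P + 1) ^ e * P) (by apply Nat.mul_pos; positivity; omega)
    omega
  · have : (P + 1) ^ (e + 2) * P + P + (P + 1) ^ (t + 1) =
        P + (P + 1) * ((P + 1) ^ (e + 1) * P + (P + 1) ^ t) := by ring
    rw [this, ds_add _ hp5 _ _ (by omega)]
    omega

lemma core (p : ℕ) (hp : p.Prime) (hp5 : 5 ≤ p) (m n s : ℕ)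
    (hmn : m + 2 ≤ n) (hm : 4 ≤ m) (hs2 : 2 ≤ s) (hsp : s < p) (S : Multiset MayGen)
    (hc : S.card ≤ s + 1)
    (h : (((S.map fun x => p ^ en x).sum : ℕ) - ((S.map fun x => p ^ st x).sum : ℕ) : ℤ)
      = ((p : ℤ) - 1) * ((p : ℤ) ^ n + (p : ℤ) ^ m + s * p + s)) : False := by
  have hsplit := Multiset.filter_add_not good S
  have hst : (S.map fun x => p ^ st x).sum = (S.filter good).card +
      ((S.filter fun x => ¬ good x).map fun x => p ^ st x).sum := by
    conv_lhs => rw [← hsplit]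
    rw [Multiset.map_add, Multiset.sum_add, st_good]
  have hcard : S.card = (S.filter good).card + (S.filter fun x => ¬ good x).card := by
    conv_lhs => rw [← hsplit]
    rw [Multiset.card_add]
  have hu : (S.filter good).card = s := by
    have h1 := dvd_good p S
    rw [h] at h1
    have h2 : (p : ℤ) ∣ ((S.filter good).card : ℤ) - s := by
      have h3 : (p : ℤ) ∣ ((p : ℤ) - 1) * ((p : ℤ) ^ n + (p : ℤ) ^ m + s * p + s) + s := by
        have a1 : (p : ℤ) ∣ (p : ℤ) ^ n := dvd_pow_self _ (by omega)
        have a2 : (p : ℤ) ∣ (p : ℤ) ^ m := dvd_pow_self _ (by omega)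
        obtain ⟨x, hx⟩ := a1
        obtain ⟨y, hy⟩ := a2
        rw [hx, hy]
        exact ⟨((p : ℤ) - 1) * (x + y + s) + s, by ring⟩
      have := dvd_sub h1 h3
      obtain ⟨k, hk⟩ := this
      exact ⟨k, by linear_combination hk⟩
    obtain ⟨k, hk⟩ := h2
    have b1 : k < 1 := by nlinarith
    have b2 : -1 < k := by nlinarith
    have : k = 0 := by omega
    subst this
    omega
  have hds := ds_sum p hp hp5 en S
  set E := (S.map fun x => p ^ en x).sum with hE
  have hd : n = m + (n - m) := by omega
  set d := n - m with hdd
  have hEq : E = p ^ m * (p ^ d * (p - 1) + (p - 1)) + s * p ^ 2 +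
      ((S.filter fun x => ¬ good x).map fun x => p ^ st x).sum := by
    rw [hst, hu, hd] at h
    zify [show 1 ≤ p by omega]
    push_cast at h
    rw [pow_add] at h
    linear_combination h
  have hs3 : s * p ^ 2 < p ^ 3 := by
    rw [pow_succ p 2, mul_comm]
    exact Nat.mul_lt_mul_of_pos_left hsp (by positivity)
  have hp3m : p ^ 3 ≤ p ^ (m - 1) := Nat.pow_le_pow_right (by omega) (by omega)
  have hpm : p ^ m = p ^ (m - 1) * p := by rw [← pow_succ]; congr 1; omega
  have hpm2 : p ^ (m - 1) * 2 ≤ p ^ m := by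
    rw [hpm]; exact Nat.mul_le_mul_left _ (by omega)
  have hlt : s * p ^ 2 < p ^ m := by omega
  rcases Nat.lt_or_ge 0 (S.filter fun x => ¬ good x).card with hpos | hz
  · have h1 : (S.filter fun x => ¬ good x).card = 1 := by omega
    obtain ⟨x, hx⟩ := Multiset.card_eq_one.1 h1
    rw [hx] at hEq
    simp only [Multiset.map_singleton, Multiset.sum_singleton] at hEq
    rcases Nat.lt_or_ge (st x) m with hlm | hge
    · have hpx : p ^ st x ≤ p ^ (m - 1) := Nat.pow_le_pow_right (by omega) (by omega)
      have := low_bound p hp5 d (by omega) m (s * p ^ 2 + p ^ st x) (by omega)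
      rw [← add_assoc, ← hEq] at this
      omega
    · have e1 : E = p ^ m * (p ^ d * (p - 1) + (p - 1) + p ^ (st x - m)) + s * p ^ 2 := by
        rw [hEq]
        have : p ^ st x = p ^ m * p ^ (st x - m) := by rw [← pow_add]; congr 1; omega
        rw [this]; ring
      rw [e1, ds_pow_mul p hp5 _ _ _ hlt] at hds
      have h2 := high_bound p hp5 d (st x - m) (by omega)
      have h3 := ds_pow_mul p hp5 2 s 0 (by positivity)
      have h4 := ds_add p hp5 s 0 hsp
      rw [add_zero, mul_comm] at h3
      rw [mul_zero, add_zero] at h4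
      omega
  · have h1 : (S.filter fun x => ¬ good x) = 0 := Multiset.card_eq_zero.1 (by omega)
    rw [h1] at hEq
    simp only [Multiset.map_zero, Multiset.sum_zero, add_zero] at hEq
    have := low_bound p hp5 d (by omega) m (s * p ^ 2) hlt
    rw [← hEq] at this
    omega

end MayAux

/-- for `n ≥ m+2 > 5`, `2 ≤ s < p`, `2 ≤ r ≤ s+3`, there is no admissible
monomial of total filtration `s+3-r` and total degree `q(pⁿ + pᵐ + sp + s) + s - r - 1`. -/
theorem stmt6 (p : ℕ) (hp : p.Prime) (hp5 : 5 ≤ p) (m n s r : ℕ)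
    (hmn : m + 2 ≤ n) (hm : 5 < m + 2) (hs2 : 2 ≤ s) (hsp : s < p)
    (hr2 : 2 ≤ r) (hrs : r ≤ s + 3) :
    ¬ ∃ S : Multiset MayGen, (∀ x ∈ S, x.IsValid) ∧ Admissible S ∧
      (totalFilt S : ℤ) = (s : ℤ) + 3 - r ∧
      (totalDeg p S : ℤ) =
        2 * ((p : ℤ) - 1) * ((p : ℤ) ^ n + (p : ℤ) ^ m + s * p + s) + s - r - 1 := by
  rintro ⟨S, -, -, hf, hD⟩
  have h1 := MayAux.isA_le S
  have h2 := MayAux.card_le S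
  have h3 := MayAux.total_eq p hp5 S
  have h4 := MayAux.dvd_diff p S
  rw [hD] at h3
  obtain ⟨D, hDD⟩ := h4
  rw [hDD] at h3
  set A := (S.map MayAux.isA).sum with hA
  have hk : (A : ℤ) - ((s : ℤ) - r - 1) = 2 * ((p : ℤ) - 1) *
      ((p : ℤ) ^ n + (p : ℤ) ^ m + s * p + s - D) := by linear_combination -h3
  set k := (p : ℤ) ^ n + (p : ℤ) ^ m + s * p + s - D with hkd
  have b1 : k < 1 := by
    by_contra hcon
    have : 1 ≤ k := by omega
    nlinarith
  have b2 : -1 < k := by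
    by_contra hcon
    have : k ≤ -1 := by omega
    nlinarith
  have hk0 : k = 0 := by omega
  refine MayAux.core p hp hp5 m n s hmn (by omega) hs2 hsp S (by omega) ?_
  rw [hDD]
  congr 1
  omega
end

section
/- Let p ≥ 5 be a prime, q = 2(p−1), and let m, n, s be integers with n ≥ m+2 > 5 and 2 ≤ s ≤ p−2. Then there is no admissible monomial of total filtration s+2 and total degree q(p^n + p^m + sp + s) + s − 2. (This is the combinatorial content of the vanishing E₁^{s+2, t(s)+s−2, *} = 0 in the May spectral sequence, where t(s) = q(p^n + p^m + sp + s), for the case r = 1 and s < p−1 of Lemma 3.1.) -/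
namespace MayGen

/-- Lowest position of the block of digits of a generator. -/
def lo : MayGen → ℕ
  | a _ => 0
  | h _ j => j
  | b _ j => j + 1

/-- Length of the block of digits of a generator. -/
def len : MayGen → ℕ
  | a k => k
  | h i _ => i
  | b i _ => i

/-- Indicator of the generators `a k`. -/
def isA : MayGen → ℕ
  | a _ => 1
  | h _ _ => 0
  | b _ _ => 0

/-- Indicator that position `j` lies in the block. -/
def cc (j : ℕ) (x : MayGen) : ℕ := if x.lo ≤ j ∧ j < x.lo + x.len then 1 else 0

/-- The part of the block from position `j` on, shifted down. -/
def ww (p j : ℕ) (x : MayGen) : ℕ :=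
  ∑ k ∈ Finset.range x.len, if j ≤ x.lo + k then p ^ (x.lo + k - j) else 0

theorem ww_rec (p j : ℕ) (x : MayGen) : x.ww p j = x.cc j + p * x.ww p (j + 1) := by
  have hc : x.cc j = ∑ k ∈ Finset.range x.len, if x.lo + k = j then 1 else 0 := by
    unfold cc
    split_ifs with h
    · rw [Finset.sum_eq_single (j - x.lo)]
      · rw [if_pos (by omega)]
      · intro b _ hb
        rw [if_neg (by omega)]
      · intro hb
        simp only [Finset.mem_range] at hb
        omega
    · symm
      apply Finset.sum_eq_zero
      intro k hk
      simp only [Finset.mem_range] at hk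
      rw [if_neg (by omega)]
  rw [hc, ww, ww, Finset.mul_sum, ← Finset.sum_add_distrib]
  apply Finset.sum_congr rfl
  intro k _
  rcases lt_trichotomy (x.lo + k) j with h | h | h
  · rw [if_neg (by omega), if_neg (by omega), if_neg (by omega)]; simp
  · rw [if_pos (by omega), if_pos (by omega), if_neg (by omega), h]; simp
  · rw [if_pos (by omega), if_neg (by omega), if_pos (by omega)]
    rw [show x.lo + k - j = (x.lo + k - (j + 1)) + 1 by omega, pow_succ]
    ring

theorem ww_zero (p : ℕ) (hp : 1 ≤ p) (x : MayGen) :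
    (p - 1) * x.ww p 0 = (p ^ x.len - 1) * p ^ x.lo := by
  have h1 : x.ww p 0 = p ^ x.lo * ∑ k ∈ Finset.range x.len, p ^ k := by
    unfold ww
    rw [Finset.mul_sum]
    apply Finset.sum_congr rfl
    intro k _
    simp [pow_add]
  have h2 : ∀ l, (p - 1) * ∑ k ∈ Finset.range l, p ^ k = p ^ l - 1 := by
    intro l
    obtain ⟨r, rfl⟩ : ∃ r, p = r + 1 := ⟨p - 1, by omega⟩
    rw [Nat.add_sub_cancel]
    apply Nat.eq_sub_of_add_eq
    induction l with
    | zero => simp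
    | succ l ih => rw [Finset.sum_range_succ, pow_succ]; linear_combination ih
  rw [h1, ← h2]
  ring

theorem deg_eq (p : ℕ) (hp : 1 ≤ p) (x : MayGen) :
    x.deg p = x.isA + 2 * (p - 1) * x.ww p 0 := by
  rw [mul_assoc, ww_zero p hp]
  cases x with
  | a k =>
    have := Nat.one_le_pow k p hp
    simp only [deg, isA, len, lo, pow_zero]
    omega
  | h i j => simp only [deg, isA, len, lo]; ring
  | b i j => simp only [deg, isA, len, lo]; ring

end MayGen

open MayGen

theorem digit_eq (p C W N d : ℕ) (hd : d < p) (hC : C < p + d) (h : C + p * W = p * N + d) :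
    C = d ∧ W = N := by
  rcases lt_trichotomy W N with hw | hw | hw
  · exfalso
    obtain ⟨t, rfl⟩ := Nat.exists_eq_add_of_lt hw
    nlinarith [Nat.zero_le (p * t)]
  · subst hw; exact ⟨by omega, rfl⟩
  · exfalso
    obtain ⟨t, rfl⟩ := Nat.exists_eq_add_of_lt hw
    nlinarith [Nat.zero_le (p * t)]

theorem msum_le (S : Multiset MayGen) (f g : MayGen → ℕ) (h : ∀ x ∈ S, f x ≤ g x) :
    (S.map f).sum ≤ (S.map g).sum := Multiset.sum_map_le_sum_map f g h

theorem count_sum (S : Multiset MayGen) (y : MayGen) :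
    (S.map (fun x => if x = y then 1 else 0)).sum = S.count y := by
  induction S using Multiset.induction_on with
  | empty => simp
  | cons a S ih =>
    rw [Multiset.map_cons, Multiset.sum_cons, ih, Multiset.count_cons]
    by_cases h : a = y
    · subst h; simp [add_comm]
    · simp [h, Ne.symm h]

theorem cc_spec (j : ℕ) (x : MayGen) :
    (x.cc j = 1 ∧ x.lo ≤ j ∧ j < x.lo + x.len) ∨
      (x.cc j = 0 ∧ ¬ (x.lo ≤ j ∧ j < x.lo + x.len)) := by
  unfold cc
  split_ifs with h
  · exact Or.inl ⟨rfl, h⟩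
  · exact Or.inr ⟨rfl, h⟩

theorem ind_spec (i j i' j' : ℕ) :
    ((if h i j = h i' j' then 1 else 0) = 1 ∧ i = i' ∧ j = j') ∨
      ((if h i j = h i' j' then 1 else 0) = 0 ∧ ¬ (i = i' ∧ j = j')) := by
  by_cases hh : h i j = h i' j'
  · rw [if_pos hh]; exact Or.inl ⟨rfl, by simpa using hh⟩
  · rw [if_neg hh]; exact Or.inr ⟨rfl, by simpa using hh⟩

theorem cc_zero_of_sum (S : Multiset MayGen) (j : ℕ) (h : (S.map (cc j)).sum = 0) :
    ∀ x ∈ S, ¬ (x.lo ≤ j ∧ j < x.lo + x.len) := by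
  intro x hx hj
  have h0 : x.cc j = 0 := Multiset.sum_eq_zero_iff.1 h _ (Multiset.mem_map_of_mem _ hx)
  rw [cc, if_pos hj] at h0
  exact one_ne_zero h0

/-- for `n ≥ m+2 > 5` and `2 ≤ s ≤ p-2`, there is no admissible monomial of
total filtration `s+2` and total degree `q(pⁿ + pᵐ + sp + s) + s - 2`. -/
theorem stmt7 (p : ℕ) (hp : p.Prime) (hp5 : 5 ≤ p) (m n s : ℕ)
    (hmn : m + 2 ≤ n) (hm : 5 < m + 2) (hs2 : 2 ≤ s) (hsp : s ≤ p - 2) :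
    ¬ ∃ S : Multiset MayGen, (∀ x ∈ S, x.IsValid) ∧ Admissible S ∧
      totalFilt S = s + 2 ∧
      totalDeg p S = 2 * (p - 1) * (p ^ n + p ^ m + s * p + s) + (s - 2) := by
  rintro ⟨S, -, hadm, hf, hd⟩
  have hps : s + 2 ≤ p := by omega
  unfold totalFilt at hf
  unfold totalDeg at hd
  obtain ⟨C, hC⟩ : ∃ C : ℕ → ℕ, ∀ j, (S.map (cc j)).sum = C j := ⟨_, fun _ => rfl⟩
  obtain ⟨W, hW⟩ : ∃ W : ℕ → ℕ, ∀ j, (S.map (ww p j)).sum = W j := ⟨_, fun _ => rfl⟩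
  obtain ⟨A, hA⟩ : ∃ A : ℕ, (S.map isA).sum = A := ⟨_, rfl⟩
  have hrec : ∀ j, W j = C j + p * W (j + 1) := by
    intro j
    rw [← hW, ← hW, ← hC, ← Multiset.sum_map_mul_left, ← Multiset.sum_map_add]
    congr 1
    exact Multiset.map_congr rfl (fun x _ => ww_rec p j x)
  have hdeg : A + 2 * (p - 1) * W 0 =
      2 * (p - 1) * (p ^ n + p ^ m + s * p + s) + (s - 2) := by
    rw [← hd, ← hW, ← hA, ← Multiset.sum_map_mul_left, ← Multiset.sum_map_add]
    congr 1
    exact Multiset.map_congr rfl (fun x _ => (deg_eq p (by omega) x).symm)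
  have hAle : A ≤ s + 2 := by
    rw [← hf, ← hA]
    apply msum_le
    intro x _
    cases x <;> simp [isA, filt]
  have hCle : ∀ j, C j ≤ s + 2 := by
    intro j
    rw [← hf, ← hC]
    apply msum_le
    intro x _
    unfold cc
    cases x <;> simp only [filt] <;> split_ifs <;> omega
  obtain ⟨hA2, hW0⟩ := digit_eq (2 * (p - 1)) A (W 0) _ (s - 2) (by omega) (by omega) hdeg
  obtain ⟨N, rfl⟩ : ∃ N, m = N + 4 := ⟨m - 4, by omega⟩
  obtain ⟨M, rfl⟩ : ∃ M, n = N + 4 + 2 + M := ⟨n - (N + 4 + 2), by omega⟩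
  obtain ⟨hC0, hW1⟩ := digit_eq p (C 0) (W 1) (p ^ (N + 5 + M) + p ^ (N + 3) + s) s (by omega)
    (by have := hCle 0; omega) (by rw [← hrec 0, hW0]; ring)
  obtain ⟨hC1, hW2⟩ := digit_eq p (C 1) (W 2) (p ^ (N + 4 + M) + p ^ (N + 2)) s (by omega)
    (by have := hCle 1; omega) (by rw [← hrec 1, hW1]; ring)
  have hr2 := hrec 2
  by_cases hlt : C 2 < p
  · -- no carry
    obtain ⟨hC2, hW3⟩ := digit_eq p (C 2) (W 3) (p ^ (N + 3 + M) + p ^ (N + 1)) 0 (by omega)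
      (by omega) (by rw [← hrec 2, hW2]; ring)
    have hsmall : ∀ j, 2 ≤ j → C j ≤ 2 := by
      intro j hj
      have : C j + C 0 ≤ C 2 + (s + 2) := by
        rw [← hf, ← hC, ← hC, ← hC, ← Multiset.sum_map_add, ← Multiset.sum_map_add]
        apply msum_le
        intro x _
        unfold cc
        cases x <;> simp only [filt] <;> split_ifs <;> omega
      omega
    have hstep : ∀ k, k ≤ N + 2 → W (k + 2) = p ^ (N + 4 + M - k) + p ^ (N + 2 - k) := by
      intro k
      induction k with
      | zero => intro _; simpa using hW2
      | succ k ih =>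
        intro hk
        have h1 := ih (by omega)
        refine (digit_eq p (C (k + 2)) (W (k + 1 + 2)) _ 0 (by omega)
          (by have := hsmall (k + 2) (by omega); omega) ?_).2
        rw [show k + 1 + 2 = k + 2 + 1 by omega, ← hrec, h1,
          show N + 4 + M - k = (N + 4 + M - (k + 1)) + 1 by omega,
          show N + 2 - k = (N + 2 - (k + 1)) + 1 by omega]
        ring
    have hWm : W (N + 4) = p ^ (2 + M) + 1 := by
      have := hstep (N + 2) le_rfl
      rw [show N + 2 + 2 = N + 4 by omega, show N + 4 + M - (N + 2) = 2 + M by omega] at this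
      simpa using this
    obtain ⟨hCm, hWm1⟩ := digit_eq p (C (N + 4)) (W (N + 5)) (p ^ (1 + M)) 1 (by omega)
      (by have := hsmall (N + 4) (by omega); omega) (by rw [← hrec, hWm]; ring)
    obtain ⟨hCm1, hWm2⟩ := digit_eq p (C (N + 5)) (W (N + 6)) (p ^ M) 0 (by omega)
      (by have := hsmall (N + 5) (by omega); omega) (by rw [← hrec, hWm1]; ring)
    have hstep2 : ∀ k, k ≤ M → W (N + 6 + k) = p ^ (M - k) := by
      intro k
      induction k with
      | zero => intro _; simpa using hWm2
      | succ k ih =>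
        intro hk
        have h1 := ih (by omega)
        refine (digit_eq p (C (N + 6 + k)) (W (N + 6 + (k + 1))) _ 0 (by omega)
          (by have := hsmall (N + 6 + k) (by omega); omega) ?_).2
        rw [show N + 6 + (k + 1) = N + 6 + k + 1 by omega, ← hrec, h1,
          show M - k = (M - (k + 1)) + 1 by omega]
        ring
    have hWn := hstep2 M le_rfl
    obtain ⟨hCn, -⟩ := digit_eq p (C (N + 6 + M)) (W (N + 6 + M + 1)) 0 1 (by omega)
      (by have := hsmall (N + 6 + M) (by omega); omega) (by rw [← hrec, hWn]; simp)
    have hz2 := cc_zero_of_sum S 2 (by rw [hC, hC2])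
    have hz5 := cc_zero_of_sum S (N + 5) (by rw [hC, hCm1])
    have h10 := hadm 1 0
    have h20 := hadm 2 0
    have key1 : C 0 ≤ A + (S.count (h 1 0) + S.count (h 2 0)) := by
      rw [← hA, ← hC, ← count_sum, ← count_sum, ← Multiset.sum_map_add, ← Multiset.sum_map_add]
      apply msum_le
      intro x hx
      have h2 := hz2 x hx
      have c0 := cc_spec 0 x
      cases x with
      | a k => simp only [isA, reduceCtorEq, reduceIte]; omega
      | h i j =>
        have e1 := ind_spec i j 1 0
        have e2 := ind_spec i j 2 0
        simp only [isA, lo, len] at h2 c0 ⊢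
        omega
      | b i j =>
        simp only [isA, lo, len, reduceCtorEq, reduceIte] at h2 c0 ⊢
        omega
    have key2 : C 1 + (C (N + 4) + (C (N + 6 + M) + S.count (h 1 0))) ≤ s + 2 := by
      rw [← hf, ← hC, ← hC, ← hC, ← count_sum, ← Multiset.sum_map_add, ← Multiset.sum_map_add,
        ← Multiset.sum_map_add]
      apply msum_le
      intro x hx
      have h2 := hz2 x hx
      have h5 := hz5 x hx
      have c1 := cc_spec 1 x
      have c4 := cc_spec (N + 4) x
      have c6 := cc_spec (N + 6 + M) x
      clear hrec hstep hstep2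
      cases x with
      | a k =>
        simp only [filt, lo, len, reduceCtorEq, reduceIte] at h2 h5 c1 c4 c6 ⊢
        omega
      | h i j =>
        have e1 := ind_spec i j 1 0
        simp only [filt, lo, len] at h2 h5 c1 c4 c6 ⊢
        omega
      | b i j =>
        simp only [filt, lo, len, reduceCtorEq, reduceIte] at h2 h5 c1 c4 c6 ⊢
        omega
    omega
  · -- carry
    have hC2 : C 2 = p := by have := hCle 2; omega
    have hsp2 : s + 2 = p := by have := hCle 2; omega
    have hmono : ∀ j, 2 ≤ j → C (j + 1) ≤ C j := by
      intro j hj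
      have : C (j + 1) + C 2 ≤ C j + (s + 2) := by
        rw [← hf, ← hC, ← hC, ← hC, ← Multiset.sum_map_add, ← Multiset.sum_map_add]
        apply msum_le
        intro x _
        unfold cc
        cases x <;> simp only [filt] <;> split_ifs <;> omega
      omega
    have hW3 : W 3 + 1 = p ^ (N + 3 + M) + p ^ (N + 1) := by
      have h1 : p * (W 3 + 1) = p * (p ^ (N + 3 + M) + p ^ (N + 1)) := by
        calc p * (W 3 + 1) = W 2 := by rw [hr2, hC2]; ring
          _ = _ := by rw [hW2]; ring
      exact Nat.eq_of_mul_eq_mul_left (by omega) h1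
    have hdig : ∀ j X, W j + 1 = p * X → C j + 1 = p ∧ W (j + 1) + 1 = X := by
      intro j X hX
      have h1 := hrec j
      have h2 := hCle j
      have h3 : (C j + 1) + p * W (j + 1) = p * X := by rw [← hX, h1]; ring
      have := digit_eq p (C j) (W (j + 1) + 1) X (p - 1) (by omega) (by omega)
        (by rw [Nat.mul_add]; omega)
      omega
    have hstep : ∀ k, k ≤ N + 1 → W (k + 3) + 1 = p ^ (N + 3 + M - k) + p ^ (N + 1 - k) := by
      intro k
      induction k with
      | zero => intro _; simpa using hW3
      | succ k ih =>
        intro hk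
        have h1 := ih (by omega)
        rw [show k + 1 + 3 = k + 3 + 1 by omega]
        refine (hdig (k + 3) _ ?_).2
        rw [h1, show N + 3 + M - k = (N + 3 + M - (k + 1)) + 1 by omega,
          show N + 1 - k = (N + 1 - (k + 1)) + 1 by omega]
        ring
    have hWm : W (N + 4) = p ^ (2 + M) := by
      have := hstep (N + 1) le_rfl
      rw [show N + 1 + 3 = N + 4 by omega, show N + 3 + M - (N + 1) = 2 + M by omega] at this
      simpa using this
    have hCm1 : C (N + 3) + 1 = p := by
      have h1 := hstep N (by omega)
      rw [show N + 3 + M - N = (2 + M) + 1 by omega, show N + 1 - N = 0 + 1 by omega] at h1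
      exact (hdig (N + 3) (p ^ (2 + M) + p ^ 0) (by rw [h1]; ring)).1
    have hCj : ∀ k, C (N + 4 + k) < p := by
      intro k
      induction k with
      | zero =>
                have h1 : C (N + 4) ≤ C (N + 3) := hmono (N + 3) (by omega)
                simp only [add_zero]; omega
      | succ k ih =>
        have := hmono (N + 4 + k) (by omega)
        rw [show N + 4 + (k + 1) = N + 4 + k + 1 by omega]
        omega
    have hstep2 : ∀ k, k ≤ 2 + M → W (N + 4 + k) = p ^ (2 + M - k) := by
      intro k
      induction k with
      | zero => intro _; simpa using hWm
      | succ k ih =>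
        intro hk
        have h1 := ih (by omega)
        refine (digit_eq p (C (N + 4 + k)) (W (N + 4 + (k + 1))) _ 0 (by omega)
          (by have := hCj k; omega) ?_).2
        rw [show N + 4 + (k + 1) = N + 4 + k + 1 by omega, ← hrec, h1,
          show 2 + M - k = (2 + M - (k + 1)) + 1 by omega]
        ring
    have hC4 : C (N + 4) = 0 :=
      (digit_eq p (C (N + 4)) (W (N + 5)) (p ^ (1 + M)) 0 (by omega)
        (by have := hCj 0; simp only [add_zero] at this; omega)
        (by rw [← hrec, hWm]; ring)).1
    have hCz : ∀ k, C (N + 4 + k) = 0 := by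
      intro k
      induction k with
      | zero => exact hC4
      | succ k ih =>
        have := hmono (N + 4 + k) (by omega)
        rw [show N + 4 + (k + 1) = N + 4 + k + 1 by omega]
        omega
    have hWn := hstep2 (2 + M) le_rfl
    have hCn := (digit_eq p (C (N + 4 + (2 + M))) (W (N + 4 + (2 + M) + 1)) 0 1 (by omega)
      (by have := hCj (2 + M); omega) (by rw [← hrec, hWn]; simp)).1
    have := hCz (2 + M)
    omega
end

section
/- Let p ≥ 5 be a prime, q = 2(p−1), and let m, n be integers with n ≥ m+2 > 5. Then the unique admissible monomial of total filtration 3 and total degree q(2p^{n−1} + 2p^{n−2} + ⋯ + 2p^{m+1} + 3p^m + 3p^{m−1} + ⋯ + 3p + 3) + 1 is the multiset {a_n, h_{n,0}, h_{m+1,0}}. (This is the combinatorial content of the computation E₁^{3, t, *} = Z_p{a_n h_{n,0} h_{m+1,0}} used in the proof of Lemma 3.1.) -/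
theorem may_zero_or {p : ℕ} (k : ℕ) : (k = 0 ∧ p ^ k = 1) ∨ (1 ≤ k ∧ ∃ c, p ^ k = p * c) := by
  rcases k with _ | k
  · left; simp
  · right; exact ⟨by omega, p ^ k, by rw [pow_succ, mul_comm]⟩

theorem may_mod {p u v r s : ℕ} (h : p * u + r = p * v + s) (hr : r < p) (hs : s < p) :
    r = s := by
  have h2 := congrArg (· % p) h
  simpa [Nat.mul_add_mod, Nat.mod_eq_of_lt hr, Nat.mod_eq_of_lt hs] using h2

theorem may_deg_a {p : ℕ} (hp : 5 ≤ p) (k : ℕ) : MayGen.deg p (.a k) + 1 = 2 * p ^ k := by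
  have : 1 ≤ p ^ k := Nat.one_le_pow _ _ (by omega)
  simp only [MayGen.deg]; omega

theorem may_deg_h {p : ℕ} (hp : 5 ≤ p) (i j : ℕ) :
    MayGen.deg p (.h i j) + 2 * p ^ j = 2 * p ^ (i + j) := by
  obtain ⟨c, hc⟩ : ∃ c, p ^ i = c + 1 :=
    ⟨p ^ i - 1, by have : 1 ≤ p ^ i := Nat.one_le_pow _ _ (by omega)
                   omega⟩
  simp only [MayGen.deg, pow_add, hc, Nat.add_sub_cancel]; ring

theorem may_deg_b {p : ℕ} (hp : 5 ≤ p) (i j : ℕ) :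
    MayGen.deg p (.b i j) + 2 * p ^ (j + 1) = 2 * p ^ (i + j + 1) :=
  may_deg_h hp i (j + 1)

theorem may_lt {p : ℕ} (hp : 5 ≤ p) {a b : ℕ} (h : a < b) : 5 * p ^ a ≤ p ^ b := by
  calc 5 * p ^ a ≤ p * p ^ a := Nat.mul_le_mul_right _ hp
    _ = p ^ (a + 1) := by rw [pow_succ, mul_comm]
    _ ≤ p ^ b := Nat.pow_le_pow_right (by omega) h

theorem may_two {p : ℕ} (hp : 5 ≤ p) {x y r n : ℕ} (hr : r < n)
    (h : p ^ x + p ^ y = p ^ r + p ^ n) : (x = n ∧ y = r) ∨ (x = r ∧ y = n) := by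
  have inj := Nat.pow_right_injective (show 2 ≤ p by omega)
  have h0 := may_lt hp hr
  have h1 : 1 ≤ p ^ r := Nat.one_le_pow _ _ (by omega)
  have hx : x ≤ n := by
    by_contra hc
    have := may_lt hp (show n < x by omega)
    omega
  have hy : y ≤ n := by
    by_contra hc
    have := may_lt hp (show n < y by omega)
    omega
  rcases hx.eq_or_lt with rfl | hx
  · left; exact ⟨rfl, inj (by simp only; omega)⟩
  rcases hy.eq_or_lt with rfl | hy
  · right; exact ⟨inj (by simp only; omega), rfl⟩
  have := may_lt hp hx
  have := may_lt hp hy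
  omega

theorem may_three {p : ℕ} (hp : 5 ≤ p) {k x y r n : ℕ} (hr : r < n)
    (h : p ^ k + p ^ x + p ^ y = p ^ r + 2 * p ^ n) :
    (k = n ∧ x = n ∧ y = r) ∨ (k = n ∧ x = r ∧ y = n) ∨ (k = r ∧ x = n ∧ y = n) := by
  have h0 := may_lt hp hr
  have h1 : 1 ≤ p ^ r := Nat.one_le_pow _ _ (by omega)
  have hle : ∀ z, p ^ z ≤ p ^ r + 2 * p ^ n → z ≤ n := by
    intro z hz
    by_contra hc
    have := may_lt hp (show n < z by omega)
    omega
  rcases (hle k (by omega)).eq_or_lt with rfl | hk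
  · have := may_two hp (x := x) (y := y) hr (by omega)
    omega
  rcases (hle x (by omega)).eq_or_lt with rfl | hx
  · have := may_two hp (x := k) (y := y) hr (by omega)
    omega
  rcases (hle y (by omega)).eq_or_lt with rfl | hy
  · have := may_two hp (x := k) (y := x) hr (by omega)
    omega
  have := may_lt hp hk
  have := may_lt hp hx
  have := may_lt hp hy
  omega

theorem may_target {p : ℕ} (hp : 5 ≤ p) {m n : ℕ} (hmn : m + 2 ≤ n) :
    2 * (p - 1) * (2 * ∑ j ∈ Finset.Icc (m + 1) (n - 1), p ^ j +
            3 * ∑ j ∈ Finset.range (m + 1), p ^ j) + 6 = 4 * p ^ n + 2 * p ^ (m + 1) := by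
  have e1 : Finset.Icc (m + 1) (n - 1) = Finset.Ico (m + 1) n := by
    ext; simp only [Finset.mem_Icc, Finset.mem_Ico]; omega
  have e2 := Finset.sum_range_add_sum_Ico (fun j => p ^ j) (show m + 1 ≤ n by omega)
  have g1 := Nat.geomSum_eq (show 2 ≤ p by omega) (m + 1)
  obtain ⟨c, rfl⟩ : ∃ c, p = c + 1 := ⟨p - 1, by omega⟩
  have g : ∀ k, c * ∑ j ∈ Finset.range k, (c + 1) ^ j + 1 = (c + 1) ^ k := by
    intro k
    induction k with
    | zero => simp
    | succ k ih => rw [Finset.sum_range_succ, pow_succ, mul_add]; linarith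
  have ga := g n
  have gb := g (m + 1)
  rw [← e2] at ga
  rw [e1, Nat.add_sub_cancel]
  rw [← ga, ← gb]
  ring

theorem may_aaa {p : ℕ} (hp : 5 ≤ p) {r n x y z : ℕ} (hr : 1 ≤ r) (hn : 1 ≤ n)
    (h : p ^ x + p ^ y + p ^ z + 1 = 2 * p ^ n + p ^ r) : False := by
  rcases may_zero_or (p := p) n with ⟨_, _⟩ | ⟨_, N, hN⟩
  · omega
  rcases may_zero_or (p := p) r with ⟨_, _⟩ | ⟨_, R, hR⟩
  · omega
  have key : ∀ w s, p * w + s = 2 * p ^ n + p ^ r → s < p → s = 0 := by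
    intro w s h1 h2
    exact may_mod (v := 2 * N + R) (by rw [h1, hN, hR]; ring) h2 (by omega)
  rcases may_zero_or (p := p) x with ⟨_, hx⟩ | ⟨_, X, hx⟩ <;>
  rcases may_zero_or (p := p) y with ⟨_, hy⟩ | ⟨_, Y, hy⟩ <;>
  rcases may_zero_or (p := p) z with ⟨_, hz⟩ | ⟨_, Z, hz⟩ <;>
  rw [hx, hy, hz] at h
  · have := key 0 4 (by linarith) (by omega); omega
  · have := key Z 3 (by linarith) (by omega); omega
  · have := key Y 3 (by linarith) (by omega); omega
  · have := key (Y + Z) 2 (by linarith) (by omega); omega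
  · have := key X 3 (by linarith) (by omega); omega
  · have := key (X + Z) 2 (by linarith) (by omega); omega
  · have := key (X + Y) 2 (by linarith) (by omega); omega
  · have := key (X + Y + Z) 1 (by linarith) (by omega); omega

/-- The congruence step for `a h h`; the case `a b` is included via `j₂`. -/
theorem may_ahh {p : ℕ} (hp : 5 ≤ p) {r n k A B j l : ℕ} (hr : 1 ≤ r) (hn : 1 ≤ n)
    (hA : 1 ≤ A) (hB : 1 ≤ B)
    (h : p ^ k + p ^ A + p ^ B + 2 = 2 * p ^ n + p ^ r + p ^ j + p ^ l) : j = 0 ∧ l = 0 := by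
  rcases may_zero_or (p := p) n with ⟨_, _⟩ | ⟨_, N, hN⟩
  · omega
  rcases may_zero_or (p := p) r with ⟨_, _⟩ | ⟨_, R, hR⟩
  · omega
  rcases may_zero_or (p := p) A with ⟨_, _⟩ | ⟨_, A', hA'⟩
  · omega
  rcases may_zero_or (p := p) B with ⟨_, _⟩ | ⟨_, B', hB'⟩
  · omega
  rcases may_zero_or (p := p) k with ⟨_, hx⟩ | ⟨_, X, hx⟩ <;>
  rcases may_zero_or (p := p) j with ⟨_, hy⟩ | ⟨_, Y, hy⟩ <;>
  rcases may_zero_or (p := p) l with ⟨_, hz⟩ | ⟨_, Z, hz⟩ <;>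
  rw [hx, hy, hz, hN, hR, hA', hB'] at h
  · omega
  · have := may_mod (p := p) (u := A' + B') (r := 3) (v := 2 * N + R + Z) (s := 1)
      (by linarith) (by omega) (by omega)
    omega
  · have := may_mod (p := p) (u := A' + B') (r := 3) (v := 2 * N + R + Y) (s := 1)
      (by linarith) (by omega) (by omega)
    omega
  · have := may_mod (p := p) (u := A' + B') (r := 3) (v := 2 * N + R + Y + Z) (s := 0)
      (by linarith) (by omega) (by omega)
    omega
  · omega
  · have := may_mod (p := p) (u := X + A' + B') (r := 2) (v := 2 * N + R + Z) (s := 1)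
      (by linarith) (by omega) (by omega)
    omega
  · have := may_mod (p := p) (u := X + A' + B') (r := 2) (v := 2 * N + R + Y) (s := 1)
      (by linarith) (by omega) (by omega)
    omega
  · have := may_mod (p := p) (u := X + A' + B') (r := 2) (v := 2 * N + R + Y + Z) (s := 0)
      (by linarith) (by omega) (by omega)
    omega

theorem may_ab {p : ℕ} (hp : 5 ≤ p) {m n k i j : ℕ} (hmn : m + 2 ≤ n)
    (h : MayGen.deg p (.a k) + MayGen.deg p (.b i j) + 5 = 4 * p ^ n + 2 * p ^ (m + 1)) :
    False := by
  have h1 := may_deg_a hp k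
  have h2 := may_deg_b hp i j
  have := may_ahh hp (r := m + 1) (n := n) (k := k) (A := i + j + 1) (B := 1) (j := j + 1)
    (l := 1) (by omega) (by omega) (by omega) (by omega) (by omega)
  omega

theorem may_main {p : ℕ} (hp : 5 ≤ p) {m n k i j i' j' : ℕ} (hmn : m + 2 ≤ n)
    (hi : 1 ≤ i) (hi' : 1 ≤ i') (hne : ¬ (i = i' ∧ j = j'))
    (h : MayGen.deg p (.a k) + MayGen.deg p (.h i j) + MayGen.deg p (.h i' j') + 5
      = 4 * p ^ n + 2 * p ^ (m + 1)) :
    ({.a k, .h i j, .h i' j'} : Multiset MayGen) = {.a n, .h n 0, .h (m + 1) 0} := by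
  have h1 := may_deg_a hp k
  have h2 := may_deg_h hp i j
  have h3 := may_deg_h hp i' j'
  obtain ⟨rfl, rfl⟩ := may_ahh hp (r := m + 1) (n := n) (k := k) (A := i + j) (B := i' + j')
    (j := j) (l := j') (by omega) (by omega) (by omega) (by omega) (by omega)
  simp only [pow_zero, add_zero] at h2 h3
  rcases may_three hp (k := k) (x := i) (y := i') (r := m + 1) (n := n) (by omega) (by omega)
    with ⟨rfl, rfl, rfl⟩ | ⟨rfl, rfl, rfl⟩ | ⟨rfl, rfl, rfl⟩
  · rfl
  · congr 1; exact Multiset.cons_swap _ _ _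
  · simp at hne

theorem may_split (S : Multiset MayGen) :
    S = 0 ∨ ∃ x T, S = x ::ₘ T ∧ totalFilt S = x.filt + totalFilt T ∧ 1 ≤ x.filt := by
  induction S using Multiset.induction_on with
  | empty => left; rfl
  | cons x T _ =>
    right
    refine ⟨x, T, rfl, by simp [totalFilt], ?_⟩
    cases x <;> simp [MayGen.filt]

theorem may_shape (S : Multiset MayGen) (h : totalFilt S = 3) :
    (∃ x y, S = {x, y} ∧ x.filt + y.filt = 3) ∨
    (∃ x y z, S = {x, y, z} ∧ x.filt = 1 ∧ y.filt = 1 ∧ z.filt = 1) := by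
  have z0 : totalFilt 0 = 0 := rfl
  have f2 : ∀ x : MayGen, x.filt ≤ 2 := by intro x; cases x <;> simp [MayGen.filt]
  rcases may_split S with rfl | ⟨x, T, rfl, e1, l1⟩
  · omega
  have := f2 x
  rcases may_split T with rfl | ⟨y, U, rfl, e2, l2⟩
  · omega
  rcases may_split U with rfl | ⟨z, V, rfl, e3, l3⟩
  · left; exact ⟨x, y, rfl, by omega⟩
  rcases may_split V with rfl | ⟨w, W, rfl, e4, l4⟩
  · right; exact ⟨x, y, z, rfl, by omega, by omega, by omega⟩
  omega

/-- for `n ≥ m+2 > 5`, the unique admissible monomial of total filtration `3`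
and total degree `q(2p^{n-1} + ⋯ + 2p^{m+1} + 3p^m + ⋯ + 3p + 3) + 1` is
`{a n, h n 0, h (m+1) 0}`. -/
theorem stmt10 (p : ℕ) (hp : p.Prime) (hp5 : 5 ≤ p) (m n : ℕ)
    (hmn : m + 2 ≤ n) (hm : 5 < m + 2) (S : Multiset MayGen) :
    ((∀ x ∈ S, x.IsValid) ∧ Admissible S ∧ totalFilt S = 3 ∧
        totalDeg p S =
          2 * (p - 1) * (2 * ∑ j ∈ Finset.Icc (m + 1) (n - 1), p ^ j +
            3 * ∑ j ∈ Finset.range (m + 1), p ^ j) + 1) ↔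
      S = {MayGen.a n, MayGen.h n 0, MayGen.h (m + 1) 0} := by
  have tgt := may_target hp5 hmn
  constructor
  · rintro ⟨hv, ha, hf, hd⟩
    have hD : totalDeg p S + 5 = 4 * p ^ n + 2 * p ^ (m + 1) := by omega
    have ha' : ∀ i j, ¬ ({.h i j, .h i j} : Multiset MayGen) ≤ S := by
      intro i j hle
      have h1 := Multiset.count_le_of_le (MayGen.h i j) hle
      have h2 := ha i j
      simp at h1
      omega
    clear hd tgt ha
    rcases may_shape S hf with ⟨x, y, rfl, hxy⟩ | ⟨x, y, z, rfl, hx, hy, hz⟩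
    · exfalso
      simp only [totalDeg, Multiset.insert_eq_cons, Multiset.map_cons, Multiset.map_singleton,
        Multiset.sum_cons, Multiset.sum_singleton] at hD
      rcases x with k | ⟨i, j⟩ | ⟨i, j⟩ <;> rcases y with k' | ⟨i', j'⟩ | ⟨i', j'⟩ <;>
        simp only [MayGen.filt] at hxy <;> try omega
      · exact may_ab hp5 hmn hD
      · have := may_deg_h hp5 i j
        have := may_deg_b hp5 i' j'
        omega
      · exact may_ab hp5 hmn (by rw [← hD]; ring)
      · have := may_deg_b hp5 i j
        have := may_deg_h hp5 i' j'
        omega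
    · simp only [totalDeg, Multiset.insert_eq_cons, Multiset.map_cons, Multiset.map_singleton,
        Multiset.sum_cons, Multiset.sum_singleton] at hD
      have vx := hv x (by simp)
      have vy := hv y (by simp)
      have vz := hv z (by simp)
      have swap12 : ({x, y, z} : Multiset MayGen) = {y, x, z} := Multiset.cons_swap _ _ _
      have swap23 : ({x, y, z} : Multiset MayGen) = {x, z, y} := by
        congr 1; exact Multiset.cons_swap _ _ _
      have rot : ({x, y, z} : Multiset MayGen) = {z, x, y} := by
        rw [swap23]; exact Multiset.cons_swap _ _ _
      have nxy : ∀ i j, ¬ (x = .h i j ∧ y = .h i j) := by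
        rintro i j ⟨rfl, rfl⟩
        exact ha' i j (by rw [rot]; exact Multiset.le_cons_self _ _)
      have nxz : ∀ i j, ¬ (x = .h i j ∧ z = .h i j) := by
        rintro i j ⟨rfl, rfl⟩
        exact ha' i j (by rw [swap12]; exact Multiset.le_cons_self _ _)
      have nyz : ∀ i j, ¬ (y = .h i j ∧ z = .h i j) := by
        rintro i j ⟨rfl, rfl⟩
        exact ha' i j (Multiset.le_cons_self _ _)
      rcases x with k | ⟨i, j⟩ | ⟨i, j⟩ <;> rcases y with k' | ⟨i', j'⟩ | ⟨i', j'⟩ <;>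
        rcases z with k'' | ⟨i'', j''⟩ | ⟨i'', j''⟩ <;>
        simp only [MayGen.filt] at hx hy hz <;> try omega
      · have := may_deg_a hp5 k
        have := may_deg_a hp5 k'
        have := may_deg_a hp5 k''
        exact (may_aaa hp5 (r := m + 1) (n := n) (x := k) (y := k') (z := k'')
          (by omega) (by omega) (by omega)).elim
      · have := may_deg_a hp5 k
        have := may_deg_a hp5 k'
        have := may_deg_h hp5 i'' j''
        omega
      · have := may_deg_a hp5 k
        have := may_deg_h hp5 i' j'
        have := may_deg_a hp5 k''
        omega
      · exact may_main hp5 hmn vy vz (by rintro ⟨rfl, rfl⟩; exact nyz _ _ ⟨rfl, rfl⟩)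
          (by rw [← hD]; ring)
      · have := may_deg_h hp5 i j
        have := may_deg_a hp5 k'
        have := may_deg_a hp5 k''
        omega
      · rw [swap12]
        exact may_main hp5 hmn vx vz (by rintro ⟨rfl, rfl⟩; exact nxz _ _ ⟨rfl, rfl⟩)
          (by rw [← hD]; ring)
      · rw [rot]
        exact may_main hp5 hmn vx vy (by rintro ⟨rfl, rfl⟩; exact nxy _ _ ⟨rfl, rfl⟩)
          (by rw [← hD]; ring)
      · have := may_deg_h hp5 i j
        have := may_deg_h hp5 i' j'
        have := may_deg_h hp5 i'' j''
        omega
  · rintro rfl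
    refine ⟨?_, ?_, rfl, ?_⟩
    · intro x hx
      simp only [Multiset.insert_eq_cons, Multiset.mem_cons, Multiset.mem_singleton] at hx
      rcases hx with rfl | rfl | rfl <;> simp only [MayGen.IsValid] <;> omega
    · intro i j
      simp only [Multiset.insert_eq_cons, Multiset.count_cons, Multiset.count_singleton,
        MayGen.h.injEq, reduceCtorEq, if_false]
      split_ifs <;> omega
    · simp only [totalDeg, Multiset.insert_eq_cons, Multiset.map_cons, Multiset.map_singleton,
        Multiset.sum_cons, Multiset.sum_singleton]
      have h1 := may_deg_a hp5 n
      have h2 := may_deg_h hp5 n 0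
      have h3 := may_deg_h hp5 (m + 1) 0
      simp only [pow_zero, add_zero] at h2 h3
      omega
end

section
/- Let p ≥ 5 be a prime, q = 2(p−1), and let m, n be integers with n ≥ m+2 > 5. Then the admissible monomials of total filtration 3 and total degree q(2p^{n−1} + ⋯ + 2p^{m+1} + 3p^m + ⋯ + 3p² + 2p + 2) + 1 are exactly the three multisets {a_{m+1}, h_{n−2,2}, h_{n,0}}, {a_n, h_{m−1,2}, h_{n,0}}, and {a_n, h_{m+1,0}, h_{n−2,2}}. (This is the combinatorial content of the computation E₁^{3, t, *} = Z_p{a_{m+1} h_{n−2,2} h_{n,0}, a_n h_{m−1,2} h_{n,0}, a_n h_{m+1,0} h_{n−2,2}} used in the proof of Lemma 3.1.) -/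
theorem digits_unique (p : ℕ) (N : ℕ) : ∀ (f g : ℕ → ℕ), (∀ i, f i < p) → (∀ i, g i < p) →
    ∑ i ∈ Finset.range N, f i * p ^ i = ∑ i ∈ Finset.range N, g i * p ^ i →
    ∀ i < N, f i = g i := by
  induction N with
  | zero => intro f g _ _ _ i hi; omega
  | succ N ih =>
    intro f g hf hg h
    have key : ∀ f : ℕ → ℕ, ∑ i ∈ Finset.range (N + 1), f i * p ^ i =
        f 0 + p * ∑ i ∈ Finset.range N, f (i + 1) * p ^ i := by
      intro f
      rw [Finset.sum_range_succ', Finset.mul_sum, add_comm]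
      congr 1
      · simp
      · apply Finset.sum_congr rfl
        intro i _
        ring
    rw [key, key] at h
    have h0 : f 0 = g 0 := by
      have := congrArg (· % p) h
      simpa [Nat.add_mul_mod_self_left, Nat.mod_eq_of_lt (hf 0), Nat.mod_eq_of_lt (hg 0)] using this
    have hp : 0 < p := lt_of_le_of_lt (Nat.zero_le _) (hf 0)
    rw [h0] at h
    have h1 := Nat.eq_of_mul_eq_mul_left hp (Nat.add_left_cancel h)
    have h2 := ih (fun i => f (i + 1)) (fun i => g (i + 1)) (fun i => hf _) (fun i => hg _) h1
    intro i hi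
    cases i with
    | zero => exact h0
    | succ i => exact h2 i (by omega)

theorem pow_as_sum (p N x : ℕ) (hx : x < N) :
    p ^ x = ∑ i ∈ Finset.range N, (if x = i then 1 else 0) * p ^ i := by
  simp [ite_mul, hx]

theorem exps_eq (p k u v n m j l : ℕ) (hp5 : 5 ≤ p) (hmn : m + 2 ≤ n)
    (h : p ^ k + p ^ u + p ^ v + p ^ 2 + p ^ 0 = p ^ n + p ^ n + p ^ (m + 1) + p ^ j + p ^ l) (i : ℕ) :
    (if k = i then 1 else 0) + (if u = i then 1 else 0) + (if v = i then 1 else 0) +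
      (if 2 = i then 1 else 0) + (if 0 = i then 1 else 0) =
    (if n = i then 1 else 0) + (if n = i then 1 else 0) + (if m + 1 = i then 1 else 0) +
      (if j = i then 1 else 0) + (if l = i then 1 else 0) := by
  set N := k + u + v + n + m + j + l + i + 3 with hN
  rw [pow_as_sum p N k (by omega), pow_as_sum p N u (by omega), pow_as_sum p N v (by omega),
    pow_as_sum p N 2 (by omega), pow_as_sum p N 0 (by omega), pow_as_sum p N n (by omega),
    pow_as_sum p N (m + 1) (by omega), pow_as_sum p N j (by omega), pow_as_sum p N l (by omega)] at h
  simp only [← Finset.sum_add_distrib, ← add_mul] at h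
  refine digits_unique p N _ _ ?_ ?_ h i (by omega)
  · intro i
    split_ifs <;> omega
  · intro i
    split_ifs <;> omega

theorem deg_a (p k : ℕ) (hp : 5 ≤ p) : (MayGen.a k).deg p + 1 = 2 * p ^ k := by
  have : 0 < p ^ k := by positivity
  simp only [MayGen.deg]
  omega

theorem deg_h (p i j : ℕ) (hp : 5 ≤ p) : (MayGen.h i j).deg p + 2 * p ^ j = 2 * p ^ (i + j) := by
  have : 0 < p ^ i := by positivity
  obtain ⟨c, hc⟩ := Nat.exists_eq_add_of_lt this
  simp only [MayGen.deg, pow_add, hc]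
  simp
  ring

theorem deg_b (p i j : ℕ) (hp : 5 ≤ p) :
    (MayGen.b i j).deg p + 2 * p ^ (j + 1) = 2 * p ^ (i + (j + 1)) :=
  deg_h p i (j + 1) hp

theorem geom (p : ℕ) (a b : ℕ) (hp : 5 ≤ p) (hab : a ≤ b + 1) :
    (p - 1) * ∑ j ∈ Finset.Icc a b, p ^ j + p ^ a = p ^ (b + 1) := by
  obtain ⟨r, rfl⟩ : ∃ r, p = r + 1 := ⟨p - 1, by omega⟩
  simp only [Nat.add_sub_cancel]
  induction b with
  | zero =>
    have : a = 0 ∨ a = 1 := by omega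
    rcases this with rfl | rfl <;> simp
  | succ b ih =>
    rcases Nat.lt_or_ge (b + 1) a with h | h
    · have : a = b + 1 + 1 := by omega
      subst this
      simp
    · rw [Finset.sum_Icc_succ_top h, mul_add, add_right_comm, ih h, pow_succ (r + 1) (b + 1)]
      ring

theorem target_eq (p m n : ℕ) (hp5 : 5 ≤ p) (hmn : m + 2 ≤ n) (hm : 5 < m + 2) :
    2 * (p - 1) * (2 * ∑ j ∈ Finset.Icc (m + 1) (n - 1), p ^ j +
      3 * ∑ j ∈ Finset.Icc 2 m, p ^ j + 2 * p + 2) + 1 + 2 * p ^ 2 + 3 =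
    4 * p ^ n + 2 * p ^ (m + 1) := by
  have h1 := geom p (m + 1) (n - 1) hp5 (by omega)
  have h2 := geom p 2 m hp5 (by omega)
  rw [Nat.sub_add_cancel (by omega)] at h1
  rw [← h1, ← h2]
  generalize ∑ j ∈ Finset.Icc (m + 1) (n - 1), p ^ j = A
  generalize ∑ j ∈ Finset.Icc 2 m, p ^ j = B
  obtain ⟨r, rfl⟩ : ∃ r, p = r + 1 := ⟨p - 1, by omega⟩
  simp only [Nat.add_sub_cancel]
  ring

theorem core (p m n T : ℕ) (hp5 : 5 ≤ p) (hmn : m + 2 ≤ n) (hm : 5 < m + 2)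
    (hT : T + 2 * p ^ 2 + 3 = 4 * p ^ n + 2 * p ^ (m + 1)) (k i j i₁ j₁ : ℕ)
    (hi : 1 ≤ i) (hi₁ : 1 ≤ i₁)
    (h : (MayGen.a k).deg p + (MayGen.h i j).deg p + (MayGen.h i₁ j₁).deg p = T) :
    (({MayGen.a k, MayGen.h i j, MayGen.h i₁ j₁} : Multiset MayGen) =
        {MayGen.a (m + 1), MayGen.h (n - 2) 2, MayGen.h n 0} ∨
      ({MayGen.a k, MayGen.h i j, MayGen.h i₁ j₁} : Multiset MayGen) =
        {MayGen.a n, MayGen.h (m - 1) 2, MayGen.h n 0} ∨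
      ({MayGen.a k, MayGen.h i j, MayGen.h i₁ j₁} : Multiset MayGen) =
        {MayGen.a n, MayGen.h (m + 1) 0, MayGen.h (n - 2) 2}) := by
  have h1 := deg_a p k hp5
  have h2 := deg_h p i j hp5
  have h3 := deg_h p i₁ j₁ hp5
  have E := exps_eq p k (i + j) (i₁ + j₁) n m j j₁ hp5 hmn (by rw [pow_zero]; omega)
  have e0 := E 0
  have e2 := E 2
  have en := E n
  have em := E (m + 1)
  clear E h1 h2 h3 h hT
  have hj : (j = 0 ∧ j₁ = 2) ∨ (j = 2 ∧ j₁ = 0) := by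
    clear en em
    grind
  clear e0 e2
  have hk : (k = m + 1 ∧ i + j = n ∧ i₁ + j₁ = n) ∨ (k = n ∧ i + j = n ∧ i₁ + j₁ = m + 1) ∨
      (k = n ∧ i + j = m + 1 ∧ i₁ + j₁ = n) := by
    grind (splits := 30)
  rcases hj with ⟨rfl, rfl⟩ | ⟨rfl, rfl⟩ <;> rcases hk with ⟨h1, h2, h3⟩ | ⟨h1, h2, h3⟩ | ⟨h1, h2, h3⟩
  · left
    obtain rfl : i = n := by omega
    obtain rfl : i₁ = i - 2 := by omega
    rw [h1]
    exact congrArg _ (Multiset.pair_comm _ _)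
  · right; left
    obtain rfl : i = n := by omega
    obtain rfl : i₁ = m - 1 := by omega
    rw [h1]
    exact congrArg _ (Multiset.pair_comm _ _)
  · right; right
    obtain rfl : i = m + 1 := by omega
    obtain rfl : i₁ = n - 2 := by omega
    rw [h1]
  · left
    obtain rfl : i₁ = n := by omega
    obtain rfl : i = i₁ - 2 := by omega
    rw [h1]
  · right; right
    obtain rfl : i₁ = m + 1 := by omega
    obtain rfl : i = n - 2 := by omega
    rw [h1]
    exact congrArg _ (Multiset.pair_comm _ _)
  · right; left
    obtain rfl : i₁ = n := by omega
    obtain rfl : i = m - 1 := by omega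
    rw [h1]

theorem filt_pos (x : MayGen) : 1 ≤ x.filt := by cases x <;> simp [MayGen.filt]

theorem filt_zero (S : Multiset MayGen) (h : totalFilt S = 0) : S = 0 := by
  induction S using Multiset.induction_on with
  | empty => rfl
  | cons x S _ =>
    have := filt_pos x
    simp only [totalFilt, Multiset.map_cons, Multiset.sum_cons] at h
    omega

theorem filt_succ (S : Multiset MayGen) (c : ℕ) (h : totalFilt S = c + 1) :
    ∃ x S₁, S = x ::ₘ S₁ ∧ x.filt + totalFilt S₁ = c + 1 := by
  induction S using Multiset.induction_on with
  | empty => simp [totalFilt] at h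
  | cons x S _ => exact ⟨x, S, rfl, by simpa [totalFilt] using h⟩

theorem filt_le (x : MayGen) : x.filt = 1 ∨ ∃ i j, x = MayGen.b i j := by
  cases x <;> simp [MayGen.filt]

theorem filt_one (S : Multiset MayGen) (h : totalFilt S = 1) : ∃ x, S = {x} ∧ x.filt = 1 := by
  obtain ⟨x, S₁, rfl, h₁⟩ := filt_succ S 0 h
  have := filt_pos x
  obtain rfl := filt_zero S₁ (by omega)
  refine ⟨x, rfl, ?_⟩
  simpa [totalFilt] using h₁

theorem filt_two (S : Multiset MayGen) (h : totalFilt S = 2) :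
    (∃ x y, S = {x, y} ∧ x.filt = 1 ∧ y.filt = 1) ∨ ∃ i j, S = {MayGen.b i j} := by
  obtain ⟨x, S₁, rfl, h₁⟩ := filt_succ S 1 h
  rcases filt_le x with hx | ⟨i, j, rfl⟩
  · obtain ⟨y, rfl, hy⟩ := filt_one S₁ (by omega)
    exact Or.inl ⟨x, y, rfl, hx, hy⟩
  · simp only [MayGen.filt] at h₁
    obtain rfl := filt_zero S₁ (by omega)
    exact Or.inr ⟨i, j, rfl⟩

theorem filt_three (S : Multiset MayGen) (h : totalFilt S = 3) :
    (∃ x y z, S = {x, y, z} ∧ x.filt = 1 ∧ y.filt = 1 ∧ z.filt = 1) ∨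
      ∃ x i j, S = {x, MayGen.b i j} ∧ x.filt = 1 := by
  obtain ⟨x, S₁, rfl, h₁⟩ := filt_succ S 2 h
  rcases filt_le x with hx | ⟨i, j, rfl⟩
  · rcases filt_two S₁ (by omega) with ⟨y, z, rfl, hy, hz⟩ | ⟨i, j, rfl⟩
    · exact Or.inl ⟨x, y, z, rfl, hx, hy, hz⟩
    · exact Or.inr ⟨x, i, j, rfl, hx⟩
  · simp only [MayGen.filt] at h₁
    obtain ⟨y, rfl, hy⟩ := filt_one S₁ (by omega)
    exact Or.inr ⟨y, i, j, Multiset.pair_comm _ _, hy⟩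

theorem no_aaa (p k l r n m : ℕ) (hp5 : 5 ≤ p)
    (h : p ^ k + p ^ l + p ^ r + p ^ 2 = 2 * p ^ n + p ^ (m + 1)) : False := by
  have key : ∀ x, p ^ x ≡ 1 [MOD (p - 1)] := by
    intro x
    have h1 : p ≡ 1 [MOD (p - 1)] := by
      have : p = 1 + (p - 1) := by omega
      conv_lhs => rw [this]
      simp [Nat.ModEq]
    simpa using h1.pow x
  have h1 := (((key k).add (key l)).add (key r)).add (key 2)
  have h2 := ((key n).mul_left 2).add (key (m + 1))
  rw [h] at h1
  have h3 := h1.symm.trans h2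
  simp only [Nat.ModEq] at h3
  norm_num at h3
  have h4 : 3 < p - 1 ∨ 4 = p - 1 := by omega
  have h5 : 3 % (p - 1) = 3 := Nat.mod_eq_of_lt (by omega)
  rw [h5] at h3
  rcases Nat.lt_or_ge 4 (p - 1) with h6 | h6
  · rw [Nat.mod_eq_of_lt h6] at h3
    omega
  · have : p - 1 = 4 := by omega
    rw [this] at h3
    omega

theorem no_ab (p k u n m j : ℕ) (hp5 : 5 ≤ p) (hn : 1 ≤ n) (hu : 1 ≤ u)
    (h : p ^ k + p ^ u + p ^ 2 + 1 = 2 * p ^ n + p ^ (m + 1) + p ^ (j + 1)) : False := by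
  have key : ∀ x, 1 ≤ x → p ∣ p ^ x := fun x hx => dvd_pow_self p (by omega)
  have h1 : p ∣ 2 * p ^ n + p ^ (m + 1) + p ^ (j + 1) :=
    dvd_add (dvd_add ((key n hn).mul_left 2) (key _ (by omega))) (key _ (by omega))
  rw [← h] at h1
  have h2 : p ∣ (p ^ u + p ^ 2) := dvd_add (key _ hu) (key _ (by omega))
  have h3 : p ∣ p ^ k + 1 := by
    rw [show p ^ k + p ^ u + p ^ 2 + 1 = (p ^ u + p ^ 2) + (p ^ k + 1) by ring] at h1
    exact (Nat.dvd_add_right h2).1 h1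
  rcases Nat.eq_zero_or_pos k with rfl | hk
  · have := Nat.le_of_dvd (by positivity) h3
    simp at this
    omega
  · have := Nat.le_of_dvd (by norm_num) ((Nat.dvd_add_right (key k hk)).1 h3)
    omega

/-- for `n ≥ m+2 > 5`, the admissible monomials of total filtration `3`
and total degree `q(2p^{n-1} + ⋯ + 2p^{m+1} + 3p^m + ⋯ + 3p² + 2p + 2) + 1` are exactly
`{a (m+1), h (n-2) 2, h n 0}`, `{a n, h (m-1) 2, h n 0}` and `{a n, h (m+1) 0, h (n-2) 2}`. -/
theorem stmt11 (p : ℕ) (hp : p.Prime) (hp5 : 5 ≤ p) (m n : ℕ)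
    (hmn : m + 2 ≤ n) (hm : 5 < m + 2) (S : Multiset MayGen) :
    ((∀ x ∈ S, x.IsValid) ∧ Admissible S ∧ totalFilt S = 3 ∧
        totalDeg p S =
          2 * (p - 1) * (2 * ∑ j ∈ Finset.Icc (m + 1) (n - 1), p ^ j +
            3 * ∑ j ∈ Finset.Icc 2 m, p ^ j + 2 * p + 2) + 1) ↔
      (S = {MayGen.a (m + 1), MayGen.h (n - 2) 2, MayGen.h n 0} ∨
       S = {MayGen.a n, MayGen.h (m - 1) 2, MayGen.h n 0} ∨
       S = {MayGen.a n, MayGen.h (m + 1) 0, MayGen.h (n - 2) 2}) := by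
  have hT := target_eq p m n hp5 hmn hm
  generalize 2 * (p - 1) * (2 * ∑ j ∈ Finset.Icc (m + 1) (n - 1), p ^ j +
            3 * ∑ j ∈ Finset.Icc 2 m, p ^ j + 2 * p + 2) + 1 = T at hT ⊢
  constructor
  · rintro ⟨hv, -, hf, hd⟩
    rcases filt_three S hf with ⟨x, y, z, rfl, hx, hy, hz⟩ | ⟨x, i, j, rfl, hx⟩
    · have hd₁ : x.deg p + y.deg p + z.deg p = T := by
        simpa [totalDeg, add_assoc] using hd
      have vx := hv x (by simp)
      have vy := hv y (by simp)
      have vz := hv z (by simp)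
      clear hd hf hv
      rcases x with k | ⟨i, j⟩ | ⟨i, j⟩
      · have d1 := deg_a p k hp5
        rcases y with k₁ | ⟨i₁, j₁⟩ | ⟨i₁, j₁⟩
        · have d2 := deg_a p k₁ hp5
          rcases z with k₂ | ⟨i₂, j₂⟩ | ⟨i₂, j₂⟩
          · have d3 := deg_a p k₂ hp5
            exact (no_aaa p k k₁ k₂ n m hp5 (by omega)).elim
          · have d3 := deg_h p i₂ j₂ hp5
            omega
          · simp [MayGen.filt] at hz
        · have d2 := deg_h p i₁ j₁ hp5
          rcases z with k₂ | ⟨i₂, j₂⟩ | ⟨i₂, j₂⟩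
          · have d3 := deg_a p k₂ hp5
            omega
          · exact core p m n T hp5 hmn hm hT k i₁ j₁ i₂ j₂ vy vz hd₁
          · simp [MayGen.filt] at hz
        · simp [MayGen.filt] at hy
      · have d1 := deg_h p i j hp5
        rcases y with k₁ | ⟨i₁, j₁⟩ | ⟨i₁, j₁⟩
        · have d2 := deg_a p k₁ hp5
          rcases z with k₂ | ⟨i₂, j₂⟩ | ⟨i₂, j₂⟩
          · have d3 := deg_a p k₂ hp5
            omega
          · have e : ({MayGen.h i j, MayGen.a k₁, MayGen.h i₂ j₂} : Multiset MayGen) =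
                {MayGen.a k₁, MayGen.h i j, MayGen.h i₂ j₂} := Multiset.cons_swap _ _ _
            rw [e]
            exact core p m n T hp5 hmn hm hT k₁ i j i₂ j₂ vx vz (by omega)
          · simp [MayGen.filt] at hz
        · have d2 := deg_h p i₁ j₁ hp5
          rcases z with k₂ | ⟨i₂, j₂⟩ | ⟨i₂, j₂⟩
          · have e : ({MayGen.h i j, MayGen.h i₁ j₁, MayGen.a k₂} : Multiset MayGen) =
                {MayGen.a k₂, MayGen.h i j, MayGen.h i₁ j₁} := by
              rw [Multiset.insert_eq_cons, Multiset.pair_comm]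
              exact Multiset.cons_swap _ _ _
            rw [e]
            exact core p m n T hp5 hmn hm hT k₂ i j i₁ j₁ vx vy (by omega)
          · have d3 := deg_h p i₂ j₂ hp5
            omega
          · simp [MayGen.filt] at hz
        · simp [MayGen.filt] at hy
      · simp [MayGen.filt] at hx
    · have hd₁ : x.deg p + (MayGen.b i j).deg p = T := by
        simpa [totalDeg] using hd
      have d2 := deg_b p i j hp5
      rcases x with k | ⟨i₁, j₁⟩ | ⟨i₁, j₁⟩
      · have d1 := deg_a p k hp5
        exact (no_ab p k (i + (j + 1)) n m j hp5 (by omega) (by omega) (by omega)).elim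
      · have d1 := deg_h p i₁ j₁ hp5
        omega
      · simp [MayGen.filt] at hx
  · have d0 := deg_a p n hp5
    have d1 := deg_a p (m + 1) hp5
    have d2 := deg_h p (n - 2) 2 hp5
    have d3 := deg_h p n 0 hp5
    have d4 := deg_h p (m - 1) 2 hp5
    have d5 := deg_h p (m + 1) 0 hp5
    rw [show n - 2 + 2 = n by omega] at d2
    rw [show m - 1 + 2 = m + 1 by omega] at d4
    simp only [Nat.add_zero, pow_zero] at d3 d5
    have adm : ∀ k i j i₁ j₁, (MayGen.h i j ≠ MayGen.h i₁ j₁) →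
        Admissible {MayGen.a k, MayGen.h i j, MayGen.h i₁ j₁} := by
      intro k i j i₁ j₁ hne a b
      apply Multiset.nodup_iff_count_le_one.1
      simp only [Multiset.insert_eq_cons, Multiset.nodup_cons, Multiset.mem_cons,
        Multiset.mem_singleton, Multiset.nodup_singleton]
      refine ⟨by simp, hne, trivial⟩
    rintro (rfl | rfl | rfl)
    · refine ⟨?_, adm _ _ _ _ _ (by simp), by simp [totalFilt, MayGen.filt], ?_⟩
      · simp [MayGen.IsValid]; omega
      · simp only [totalDeg, Multiset.insert_eq_cons, Multiset.map_cons, Multiset.sum_cons,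
          Multiset.map_singleton, Multiset.sum_singleton]
        omega
    · refine ⟨?_, adm _ _ _ _ _ (by simp), by simp [totalFilt, MayGen.filt], ?_⟩
      · simp [MayGen.IsValid]; omega
      · simp only [totalDeg, Multiset.insert_eq_cons, Multiset.map_cons, Multiset.sum_cons,
          Multiset.map_singleton, Multiset.sum_singleton]
        omega
    · refine ⟨?_, adm _ _ _ _ _ (by simp), by simp [totalFilt, MayGen.filt], ?_⟩
      · simp [MayGen.IsValid]; omega
      · simp only [totalDeg, Multiset.insert_eq_cons, Multiset.map_cons, Multiset.sum_cons,
          Multiset.map_singleton, Multiset.sum_singleton]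
        omega
end
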